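/- arXiv:1601.06118 — 2 statements merged into one kernel-verified Lean document; each statement's English description precedes it below -/
import Mathlib

section
/- Let A : ℝ → ℂ^{d×d} be real analytic and 1-periodic and let α ∈ ℝ be such that L₁(α,A) = −∞. Assume additionally that for every n the rank of A_n(x) is constant in x, say rank A_n(x) = r_n for all x. Then there exists a real analytic 1-periodic map M : ℝ → GL(d,ℂ) such that M(x+α)^{−1} A(x) M(x) = J is a constant matrix in Jordan normal form: J is block diagonal with m = dim ker A(x) blocks, each block being a nilpotent Jordan block with 0 on the diagonal and 1 on the superdiagonal. -/
open MeasureTheory Filter Topology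

/-- Iterates of the one-frequency cocycle: `A_n(x) = A(x+(n-1)α) ⋯ A(x+α) A(x)`. -/
noncomputable def matIter {d : ℕ} (α : ℝ) (A : ℝ → Matrix (Fin d) (Fin d) ℂ) :
    ℕ → ℝ → Matrix (Fin d) (Fin d) ℂ
  | 0, _ => 1
  | n + 1, x => matIter α A n (x + α) * A x

/-- The `k`-th largest singular value of a matrix, `1 ≤ k ≤ d`, via the
Courant–Fischer max–min characterization:
`σ_k(M) = max {t | ∃ V of dim k, ∀ v ∈ V, t‖v‖ ≤ ‖Mv‖}`. -/
noncomputable def singVal {d : ℕ} (k : ℕ) (M : Matrix (Fin d) (Fin d) ℂ) : ℝ :=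
  sSup {t : ℝ | ∃ V : Submodule ℂ (EuclideanSpace ℂ (Fin d)),
    Module.finrank ℂ V = k ∧ ∀ v ∈ V, t * ‖v‖ ≤ ‖(Matrix.toEuclideanLin M) v‖}

/-- The integral `∫ ln(g) dμ`, valued in `[-∞,∞]` (here `ln 0 = -∞`); by convention it is `-∞`
whenever the negative part of `ln g` is not `μ`-integrable. -/
noncomputable def elogIntegral {X : Type*} [MeasurableSpace X] (μ : Measure X) (g : X → ℝ) :
    EReal :=
  if μ {x | g x = 0} = 0 ∧ (∫⁻ x, ENNReal.ofReal (-Real.log (g x)) ∂μ) ≠ ⊤ then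
    (∫⁻ x, ENNReal.ofReal (Real.log (g x)) ∂μ).toEReal
      - (∫⁻ x, ENNReal.ofReal (-Real.log (g x)) ∂μ).toEReal
  else ⊥

/-- `L_k(α, A) = L`: the `k`-th Lyapunov exponent of the one-frequency cocycle `(α, A)`
is `L ∈ [-∞,∞)`, i.e. `L = lim_n (1/n) ∫₀¹ ln σ_k(A_n(x)) dx`. -/
def HasLyapunovExp {d : ℕ} (α : ℝ) (A : ℝ → Matrix (Fin d) (Fin d) ℂ) (k : ℕ) (L : EReal) :
    Prop :=
  Tendsto (fun n : ℕ => (((n : ℝ)⁻¹ : ℝ) : EReal)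
      * elogIntegral (volume.restrict (Set.Ioc (0:ℝ) 1))
          (fun x => singVal k (matIter α A n x)))
    atTop (𝓝 L)

/-- A real analytic, 1-periodic matrix valued map. -/
def AnalyticPeriodicMat {d e : ℕ} (A : ℝ → Matrix (Fin d) (Fin e) ℂ) : Prop :=
  Function.Periodic A 1 ∧ ∀ (x : ℝ) (i : Fin d) (j : Fin e), AnalyticAt ℝ (fun t => A t i j) x

/-!
As the ranks are constant in `x`, the kernels of `A_n(x)` stabilize at some `N` independent of `x`.
By compactness `c ‖A_N(x) v‖ ≤ ‖A_{N+1}(x) v‖` with `c > 0` independent of `x` and `v`, so unless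
`A_N` vanishes, `‖A_n(x)‖ ≥ a cⁿ` and `L₁ ≥ log c > -∞`. Hence some iterate is identically zero.

Let `q` be maximal with `A_q ≠ 0`. The kernels of `A_q(x)` have real codimension at least two and
form a one-parameter family, so some vector `v` lies in none of them; its orbit is an analytic
Jordan chain of length `q + 1`. A left inverse of the last vector of the chain, pulled back along
the cocycle, gives a dual chain, whose annihilator is an invariant analytic complement. There the
iterates again have constant rank, and one concludes by induction on the rank of the bundle.
-/

open scoped Matrix

/-! ### Analytic periodic matrices -/

namespace AnalyticPeriodicMat

variable {d e f : ℕ} {A : ℝ → Matrix (Fin d) (Fin e) ℂ}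

theorem const (A : Matrix (Fin d) (Fin e) ℂ) : AnalyticPeriodicMat fun _ : ℝ => A :=
  ⟨fun _ => rfl, fun _ _ _ => analyticAt_const⟩

theorem sub {B : ℝ → Matrix (Fin d) (Fin e) ℂ} (hA : AnalyticPeriodicMat A)
    (hB : AnalyticPeriodicMat B) : AnalyticPeriodicMat fun x => A x - B x :=
  ⟨fun x => by simp only [hA.1 x, hB.1 x], fun x i j => (hA.2 x i j).fun_sub (hB.2 x i j)⟩

theorem mul {B : ℝ → Matrix (Fin e) (Fin f) ℂ} (hA : AnalyticPeriodicMat A)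
    (hB : AnalyticPeriodicMat B) : AnalyticPeriodicMat fun x => A x * B x := by
  refine ⟨fun x => by simp only [hA.1 x, hB.1 x], fun x i j => ?_⟩
  simp only [Matrix.mul_apply]
  exact Finset.analyticAt_fun_sum _ fun k _ => (hA.2 x i k).fun_mul (hB.2 x k j)

theorem comp_add_right (hA : AnalyticPeriodicMat A) (c : ℝ) :
    AnalyticPeriodicMat fun x => A (x + c) := by
  refine ⟨fun x => ?_, fun x i j => ?_⟩
  · simp only [add_right_comm x 1 c, hA.1 (x + c)]
  · exact (hA.2 (x + c) i j).comp_of_eq (f := fun t : ℝ => t + c)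
      (analyticAt_id.fun_add analyticAt_const) rfl

theorem conjTranspose (hA : AnalyticPeriodicMat A) : AnalyticPeriodicMat fun x => (A x)ᴴ :=
  ⟨fun x => by simp only [hA.1 x], fun x i j =>
    (Complex.conjCLE.toContinuousLinearMap.analyticAt _).comp (hA.2 x j i)⟩

theorem fromCols {B : ℝ → Matrix (Fin d) (Fin f) ℂ} (hA : AnalyticPeriodicMat A)
    (hB : AnalyticPeriodicMat B) : AnalyticPeriodicMat fun x =>
      (Matrix.fromCols (A x) (B x)).submatrix id finSumFinEquiv.symm := by
  refine ⟨fun x => by simp only [hA.1 x, hB.1 x], fun x i j => ?_⟩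
  simp only [Matrix.submatrix_apply]
  rcases finSumFinEquiv.symm j with k | k
  · exact hA.2 x i k
  · exact hB.2 x i k

theorem fromRows {B : ℝ → Matrix (Fin f) (Fin e) ℂ} (hA : AnalyticPeriodicMat A)
    (hB : AnalyticPeriodicMat B) : AnalyticPeriodicMat fun x =>
      (Matrix.fromRows (A x) (B x)).submatrix finSumFinEquiv.symm id := by
  refine ⟨fun x => by simp only [hA.1 x, hB.1 x], fun x i j => ?_⟩
  simp only [Matrix.submatrix_apply]
  rcases finSumFinEquiv.symm i with k | k
  · exact hA.2 x k j
  · exact hB.2 x k j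

theorem of_columns {u : Fin e → ℝ → Matrix (Fin d) (Fin 1) ℂ}
    (hu : ∀ k, AnalyticPeriodicMat (u k)) :
    AnalyticPeriodicMat fun x => Matrix.of fun i k => u k x i 0 :=
  ⟨fun x => by simp only [(hu _).1 x], fun x i k => (hu k).2 x i 0⟩

theorem of_rows {φ : Fin d → ℝ → Matrix (Fin 1) (Fin e) ℂ}
    (hφ : ∀ k, AnalyticPeriodicMat (φ k)) :
    AnalyticPeriodicMat fun x => Matrix.of fun k i => φ k x 0 i :=
  ⟨fun x => by simp only [(hφ _).1 x], fun x k i => (hφ k).2 x 0 i⟩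

theorem analyticAt_det {A : ℝ → Matrix (Fin d) (Fin d) ℂ} (hA : AnalyticPeriodicMat A) (x : ℝ) :
    AnalyticAt ℝ (fun t => (A t).det) x := by
  simp only [Matrix.det_apply']
  exact Finset.analyticAt_fun_sum _ fun σ _ => analyticAt_const.fun_mul <|
    Finset.analyticAt_fun_prod _ fun k _ => hA.2 x (σ k) k

theorem adjugate {A : ℝ → Matrix (Fin d) (Fin d) ℂ} (hA : AnalyticPeriodicMat A) :
    AnalyticPeriodicMat fun x => (A x).adjugate := by
  refine ⟨fun x => by simp only [hA.1 x], fun x i j => ?_⟩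
  have hrow : AnalyticPeriodicMat fun t => (A t).updateRow j (Pi.single i 1) := by
    refine ⟨fun t => by simp only [hA.1 t], fun t k l => ?_⟩
    rcases eq_or_ne k j with rfl | hk
    · simpa only [Matrix.updateRow_self] using analyticAt_const
    · simpa only [Matrix.updateRow_ne hk] using hA.2 t k l
  simpa only [Matrix.adjugate_apply] using hrow.analyticAt_det x

theorem inv {A : ℝ → Matrix (Fin d) (Fin d) ℂ} (hA : AnalyticPeriodicMat A)
    (hunit : ∀ x, IsUnit (A x)) : AnalyticPeriodicMat fun x => (A x)⁻¹ := by
  refine ⟨fun x => by simp only [hA.1 x], fun x i j => ?_⟩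
  have hdet : (A x).det ≠ 0 := ((A x).isUnit_iff_isUnit_det.1 (hunit x)).ne_zero
  simp only [Matrix.inv_def, Ring.inverse_eq_inv', Matrix.smul_apply, smul_eq_mul]
  exact ((hA.analyticAt_det x).fun_inv hdet).fun_mul (hA.adjugate.2 x i j)

open scoped ComplexOrder in
theorem exists_left_inverse (hA : AnalyticPeriodicMat A)
    (hinj : ∀ x, Function.Injective (A x).mulVec) :
    ∃ L : ℝ → Matrix (Fin e) (Fin d) ℂ, AnalyticPeriodicMat L ∧ ∀ x, L x * A x = 1 := by
  have hunit : ∀ x, IsUnit ((A x)ᴴ * A x) := fun x =>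
    (Matrix.PosDef.conjTranspose_mul_self (A x) (hinj x)).isUnit
  refine ⟨fun x => ((A x)ᴴ * A x)⁻¹ * (A x)ᴴ,
    ((hA.conjTranspose.mul hA).inv hunit).mul hA.conjTranspose, fun x => ?_⟩
  rw [Matrix.mul_assoc]
  exact Matrix.nonsing_inv_mul _ ((Matrix.isUnit_iff_isUnit_det _).1 (hunit x))

theorem contDiff (hA : AnalyticPeriodicMat A) (i : Fin d) (j : Fin e) :
    ContDiff ℝ 1 fun x => A x i j :=
  contDiff_iff_contDiffAt.2 fun x => (hA.2 x i j).contDiffAt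

theorem continuous (hA : AnalyticPeriodicMat A) : Continuous A :=
  continuous_matrix fun i j => (hA.contDiff i j).continuous

end AnalyticPeriodicMat

/-! ### Vectors avoiding a one-parameter family of kernels -/

-- The vectors killed by some `b x` with pivot `j` form a smooth image of
-- `ℝ × {w | w j = 0}`, which has real dimension one less than `ι → ℂ`.
theorem dimH_setOf_exists_dotProduct_eq_zero_lt {ι : Type*} [Fintype ι] {b : ℝ → ι → ℂ}
    (hb : ContDiff ℝ 1 b) (j : ι) :
    dimH {v | ∃ x, b x j ≠ 0 ∧ b x ⬝ᵥ v = 0} < Module.finrank ℝ (ι → ℂ) := by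
  classical
  let W : Submodule ℂ (ι → ℂ) := (LinearMap.proj j : (ι → ℂ) →ₗ[ℂ] ℂ).ker
  let F : ℝ × W → ι → ℂ := fun p =>
    b p.1 j • (p.2 : ι → ℂ) - (b p.1 ⬝ᵥ (p.2 : ι → ℂ)) • Pi.single j 1
  have hsub : {v | ∃ x, b x j ≠ 0 ∧ b x ⬝ᵥ v = 0} ⊆ Set.range F := by
    rintro v ⟨x, hbj, hv⟩
    refine ⟨(x, ⟨(b x j)⁻¹ • (v - Pi.single j (v j)), by simp [W]⟩), ?_⟩
    simp [F, smul_smul, hbj, dotProduct_sub, hv, ← Pi.single_smul, Pi.single_neg]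
  have hF : ContDiff ℝ 1 F := by
    have hb' : ∀ i, ContDiff ℝ 1 fun p : ℝ × W => b p.1 i := fun i =>
      ((contDiff_pi.1 hb) i).comp contDiff_fst
    have hw : ContDiff ℝ 1 fun p : ℝ × W => (p.2 : ι → ℂ) :=
      (W.subtypeL.restrictScalars ℝ).contDiff.comp contDiff_snd
    have hdot : ContDiff ℝ 1 fun p : ℝ × W => b p.1 ⬝ᵥ (p.2 : ι → ℂ) :=
      ContDiff.sum fun i _ => (hb' i).mul ((contDiff_pi.1 hw) i)
    exact ((hb' j).smul hw).sub (hdot.smul contDiff_const)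
  have hfinrank : Module.finrank ℝ (ℝ × W) < Module.finrank ℝ (ι → ℂ) := by
    have hsurj : (LinearMap.proj j : (ι → ℂ) →ₗ[ℂ] ℂ).range = ⊤ :=
      LinearMap.range_eq_top.2 (Function.surjective_eval j)
    have hW : 1 + Module.finrank ℂ W = Module.finrank ℂ (ι → ℂ) := by
      rw [← (LinearMap.proj j : (ι → ℂ) →ₗ[ℂ] ℂ).finrank_range_add_finrank_ker, hsurj,
        finrank_top, Module.finrank_self]
    rw [Module.finrank_prod, Module.finrank_self, finrank_real_of_complex W,
      finrank_real_of_complex (ι → ℂ)]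
    omega
  calc dimH {v | ∃ x, b x j ≠ 0 ∧ b x ⬝ᵥ v = 0}
    _ ≤ dimH (Set.range F) := dimH_mono hsub
    _ ≤ Module.finrank ℝ (ℝ × W) := hF.dimH_range_le
    _ < Module.finrank ℝ (ι → ℂ) := by exact_mod_cast hfinrank

theorem exists_forall_mulVec_ne_zero {ι κ : Type*} [Finite κ] [Fintype ι]
    {B : ℝ → Matrix κ ι ℂ} (hB : ∀ i j, ContDiff ℝ 1 fun x => B x i j) (h0 : ∀ x, B x ≠ 0) :
    ∃ v : ι → ℂ, ∀ x, B x *ᵥ v ≠ 0 := by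
  let S : κ × ι → Set (ι → ℂ) := fun p => {v | ∃ x, B x p.1 p.2 ≠ 0 ∧ B x p.1 ⬝ᵥ v = 0}
  obtain ⟨i₀, j₀, -⟩ : ∃ i j, B 0 i j ≠ 0 := by
    by_contra! h
    exact h0 0 (Matrix.ext h)
  have : Nonempty (κ × ι) := ⟨(i₀, j₀)⟩
  have hdim : dimH (⋃ p, S p) < Module.finrank ℝ (ι → ℂ) := by
    obtain ⟨p, hp⟩ := exists_eq_ciSup_of_finite (f := fun p => dimH (S p))
    rw [dimH_iUnion, ← hp]
    exact dimH_setOf_exists_dotProduct_eq_zero_lt (contDiff_pi.2 (hB p.1)) p.2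
  obtain ⟨v, hv⟩ := (dense_compl_of_dimH_lt_finrank hdim).nonempty
  refine ⟨v, fun x hx => h0 x (Matrix.ext fun i j => ?_)⟩
  by_contra hij
  exact hv (Set.mem_iUnion.2 ⟨(i, j), x, hij, congrFun hx i⟩)

/-! ### Continuous families of operators of constant rank -/

theorem matrix_rank_eq_zero_iff {K m n : Type*} [Field K] [Fintype n] {A : Matrix m n K} :
    A.rank = 0 ↔ A = 0 := by
  classical
  rw [Matrix.rank, Submodule.finrank_eq_zero, LinearMap.range_eq_bot, ← Matrix.mulVecLin_zero]
  refine ⟨fun h => Matrix.ext_of_mulVec_single fun i => ?_, fun h => h ▸ rfl⟩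
  exact LinearMap.congr_fun h (Pi.single i 1)

theorem finrank_range_toEuclideanCLM {𝕜 n : Type*} [RCLike 𝕜] [Fintype n] [DecidableEq n]
    (A : Matrix n n 𝕜) :
    Module.finrank 𝕜 (Matrix.toEuclideanCLM (𝕜 := 𝕜) A).toLinearMap.range = A.rank := by
  rw [Matrix.coe_toEuclideanCLM_eq_toEuclideanLin, Matrix.toEuclideanLin, Matrix.toLpLin_eq_toLin,
    ← Matrix.rank_eq_finrank_range_toLin]

section LinearMap

variable {K V₁ V₂ V₃ : Type*} [DivisionRing K] [AddCommGroup V₁] [Module K V₁]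
  [AddCommGroup V₂] [Module K V₂] [AddCommGroup V₃] [Module K V₃] [FiniteDimensional K V₁]

theorem finrank_ker_eq_of_finrank_range_eq {f g : V₁ →ₗ[K] V₂}
    (h : Module.finrank K f.range = Module.finrank K g.range) :
    Module.finrank K f.ker = Module.finrank K g.ker := by
  have hf := f.finrank_range_add_finrank_ker
  have hg := g.finrank_range_add_finrank_ker
  omega

theorem ker_comp_eq_of_finrank_range_le (f : V₁ →ₗ[K] V₂) (g : V₂ →ₗ[K] V₃)
    (h : Module.finrank K f.range ≤ Module.finrank K (g ∘ₗ f).range) :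
    (g ∘ₗ f).ker = f.ker := by
  have hf := f.finrank_range_add_finrank_ker
  have hgf := (g ∘ₗ f).finrank_range_add_finrank_ker
  exact (Submodule.eq_of_le_of_finrank_le (LinearMap.ker_le_ker_comp f g) (by omega)).symm

end LinearMap

section ContinuousLinearMap

variable {𝕜 E F X : Type*} [NontriviallyNormedField 𝕜] [CompleteSpace 𝕜]
  [NormedAddCommGroup E] [NormedSpace 𝕜 E] [NormedAddCommGroup F] [NormedSpace 𝕜 F]
  [FiniteDimensional 𝕜 E] [TopologicalSpace X] {P Q : X → E →L[𝕜] F} {x₀ : X}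

theorem exists_eventually_norm_le_mul_norm_apply (hQ : ContinuousAt Q x₀)
    (hinj : Function.Injective (Q x₀)) :
    ∃ K > 0, ∀ᶠ x in 𝓝 x₀, ∀ v, ‖v‖ ≤ K * ‖Q x v‖ := by
  obtain ⟨K, hKpos, hanti⟩ :=
    (Q x₀).toLinearMap.exists_antilipschitzWith (LinearMap.ker_eq_bot.2 hinj)
  have : (0 : ℝ) < K := hKpos
  refine ⟨2 * K, by positivity, ?_⟩
  have hclose : ∀ᶠ x in 𝓝 x₀, ‖Q x₀ - Q x‖ < 1 / (2 * K) := by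
    filter_upwards [hQ (Metric.ball_mem_nhds _ (show (0 : ℝ) < 1 / (2 * K) by positivity))]
      with x hx
    rwa [← dist_eq_norm, dist_comm]
  filter_upwards [hclose] with x hx v
  have hdiff : ‖Q x₀ v‖ ≤ ‖Q x v‖ + 1 / (2 * K) * ‖v‖ :=
    calc ‖Q x₀ v‖ = ‖Q x v + (Q x₀ - Q x) v‖ := by simp
      _ ≤ ‖Q x v‖ + ‖Q x₀ - Q x‖ * ‖v‖ := norm_add_le_of_le le_rfl ((Q x₀ - Q x).le_opNorm v)
      _ ≤ ‖Q x v‖ + 1 / (2 * K) * ‖v‖ := by gcongr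
  have hv : ‖v‖ ≤ K * ‖Q x v‖ + ‖v‖ / 2 :=
    calc ‖v‖ ≤ K * ‖Q x₀ v‖ := by simpa using hanti.le_mul_norm_sub v 0
      _ ≤ K * (‖Q x v‖ + 1 / (2 * K) * ‖v‖) := by gcongr
      _ = K * ‖Q x v‖ + ‖v‖ / 2 := by field_simp
  linarith

-- A complement `W` of `ker (Q x₀)` stays a complement of `ker (Q x)` for `x` near `x₀`, and
-- `Q x` is uniformly bounded below on `W`.
theorem exists_eventually_mul_norm_apply_le (hP : ContinuousAt P x₀) (hQ : ContinuousAt Q x₀)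
    (hrank : ∀ x, Module.finrank 𝕜 (Q x).toLinearMap.range
      = Module.finrank 𝕜 (Q x₀).toLinearMap.range)
    (hker : ∀ x, (Q x).toLinearMap.ker ≤ (P x).toLinearMap.ker) :
    ∃ c > 0, ∀ᶠ x in 𝓝 x₀, ∀ v, c * ‖P x v‖ ≤ ‖Q x v‖ := by
  obtain ⟨W, hW⟩ := Submodule.exists_isCompl (Q x₀).toLinearMap.ker
  have hinj : Function.Injective ((Q x₀).comp W.subtypeL) := by
    refine (injective_iff_map_eq_zero _).2 fun w hw => Subtype.ext ?_
    exact Submodule.disjoint_def.1 hW.disjoint w hw w.2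
  obtain ⟨K, hK, hQW⟩ := exists_eventually_norm_le_mul_norm_apply
    (hQ.clm_comp (continuousAt_const (y := W.subtypeL))) hinj
  have hPbound : ∀ᶠ x in 𝓝 x₀, ‖P x‖ < ‖P x₀‖ + 1 := hP.norm.eventually_lt_const (lt_add_one _)
  refine ⟨((‖P x₀‖ + 1) * K)⁻¹, by positivity, ?_⟩
  filter_upwards [hQW, hPbound] with x hQW hPx v
  have hdisj : Disjoint W (Q x).toLinearMap.ker := by
    refine Submodule.disjoint_def.2 fun w hwW hwQ => ?_
    have hwQ : Q x w = 0 := hwQ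
    simpa [hwQ] using hQW ⟨w, hwW⟩
  have htop : W ⊔ (Q x).toLinearMap.ker = ⊤ := by
    refine Submodule.eq_top_of_disjoint _ _ ?_ hdisj
    rw [finrank_ker_eq_of_finrank_range_eq (hrank x), add_comm,
      Submodule.finrank_add_eq_of_isCompl hW]
  obtain ⟨w, hw, k, hk, rfl⟩ := Submodule.mem_sup.1 (htop ▸ Submodule.mem_top : v ∈ _)
  have hQk : Q x k = 0 := hk
  have hPk : P x k = 0 := hker x hk
  rw [map_add, map_add, hQk, hPk, add_zero, add_zero, inv_mul_le_iff₀ (by positivity)]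
  calc ‖P x w‖ ≤ ‖P x‖ * ‖w‖ := (P x).le_opNorm w
    _ ≤ (‖P x₀‖ + 1) * (K * ‖Q x w‖) := by gcongr; exact hQW ⟨w, hw⟩
    _ = (‖P x₀‖ + 1) * K * ‖Q x w‖ := by ring

theorem exists_forall_mem_isCompact_mul_norm_apply_le {s : Set X} (hs : IsCompact s)
    (hP : Continuous P) (hQ : Continuous Q)
    (hrank : ∀ x y, Module.finrank 𝕜 (Q x).toLinearMap.range
      = Module.finrank 𝕜 (Q y).toLinearMap.range)
    (hker : ∀ x, (Q x).toLinearMap.ker ≤ (P x).toLinearMap.ker) :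
    ∃ c > 0, ∀ x ∈ s, ∀ v, c * ‖P x v‖ ≤ ‖Q x v‖ := by
  refine hs.induction_on (p := fun s => ∃ c > 0, ∀ x ∈ s, ∀ v, c * ‖P x v‖ ≤ ‖Q x v‖)
    ⟨1, one_pos, by simp⟩ ?mono ?union fun x _ => ?nhds
  case mono =>
    rintro s t hst ⟨c, hc, h⟩
    exact ⟨c, hc, fun x hx => h x (hst hx)⟩
  case union =>
    rintro s t ⟨c, hc, hs⟩ ⟨c', hc', ht⟩
    refine ⟨min c c', lt_min hc hc', ?_⟩
    rintro x (hx | hx) v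
    · exact (by gcongr; exact min_le_left c c' : _ ≤ c * ‖P x v‖).trans (hs x hx v)
    · exact (by gcongr; exact min_le_right c c' : _ ≤ c' * ‖P x v‖).trans (ht x hx v)
  case nhds =>
    obtain ⟨c, hc, h⟩ := exists_eventually_mul_norm_apply_le hP.continuousAt hQ.continuousAt
      (hrank · x) hker
    exact ⟨_, mem_nhdsWithin_of_mem_nhds h, c, hc, fun _ => id⟩

end ContinuousLinearMap

/-! ### Vanishing of the iterates -/

/-- A cocycle over the rotation by `α`, given by its iterates. The value `B 0 x` is only required
to be idempotent, not the identity: `B` acts on the subbundle with fibres `range (B 0 x)`, so that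
restrictions to invariant subbundles are again of this form without trivializing them. -/
structure IsCocycle {d : ℕ} (α : ℝ) (B : ℕ → ℝ → Matrix (Fin d) (Fin d) ℂ) : Prop where
  analytic : ∀ n, AnalyticPeriodicMat (B n)
  map_add : ∀ (j k : ℕ) (x : ℝ), B (j + k) x = B j (x + k * α) * B k x

theorem isCocycle_matIter {d : ℕ} (α : ℝ) {A : ℝ → Matrix (Fin d) (Fin d) ℂ}
    (hA : AnalyticPeriodicMat A) : IsCocycle α (matIter α A) where
  analytic n := by
    induction n with
    | zero => exact AnalyticPeriodicMat.const 1
    | succ n ih => exact (ih.comp_add_right α).mul hA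
  map_add j k x := by
    induction k generalizing x with
    | zero => simp [matIter]
    | succ k ih =>
      have hshift : x + α + k * α = x + ↑(k + 1) * α := by push_cast; ring
      rw [← add_assoc, matIter, matIter, ih, Matrix.mul_assoc, hshift]

namespace IsCocycle

variable {d : ℕ} {α : ℝ} {B : ℕ → ℝ → Matrix (Fin d) (Fin d) ℂ}

theorem eq_zero_of_le (hB : IsCocycle α B) {m n : ℕ} (hm : ∀ x, B m x = 0) (hmn : m ≤ n) (x : ℝ) :
    B n x = 0 := by
  obtain ⟨k, rfl⟩ := Nat.exists_eq_add_of_le hmn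
  rw [hB.map_add, hm, Matrix.zero_mul]

theorem toEuclideanCLM_add_apply (hB : IsCocycle α B) (j k : ℕ) (x : ℝ)
    (v : EuclideanSpace ℂ (Fin d)) :
    Matrix.toEuclideanCLM (𝕜 := ℂ) (B (j + k) x) v
      = Matrix.toEuclideanCLM (𝕜 := ℂ) (B j (x + k * α))
        (Matrix.toEuclideanCLM (𝕜 := ℂ) (B k x) v) := by
  rw [hB.map_add, map_mul, mul_apply_eq_comp]

theorem continuous_toEuclideanCLM (hB : IsCocycle α B) (n : ℕ) :
    Continuous fun x => Matrix.toEuclideanCLM (𝕜 := ℂ) (B n x) :=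
  (LinearMap.continuous_of_finiteDimensional
    (Matrix.toEuclideanCLM (n := Fin d) (𝕜 := ℂ)).toAlgEquiv.toLinearMap).comp
      (hB.analytic n).continuous

-- Choose `N` minimizing the rank of `B N`: then `B N x` and `B (N + 1) x` have the same kernel.
theorem exists_mul_norm_apply_le_norm_succ_apply (hB : IsCocycle α B)
    (hrank : ∀ n x y, (B n x).rank = (B n y).rank) :
    ∃ (N : ℕ) (c : ℝ), 0 < c ∧ ∀ x v, c * ‖Matrix.toEuclideanCLM (𝕜 := ℂ) (B N x) v‖
      ≤ ‖Matrix.toEuclideanCLM (𝕜 := ℂ) (B (N + 1) x) v‖ := by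
  let T : ℕ → ℝ → EuclideanSpace ℂ (Fin d) →L[ℂ] EuclideanSpace ℂ (Fin d) := fun n x =>
    Matrix.toEuclideanCLM (𝕜 := ℂ) (B n x)
  obtain ⟨N, hN⟩ : ∃ N, ∀ n, (B N 0).rank ≤ (B n 0).rank :=
    ⟨_, fun n => Function.argmin_le (fun n => (B n 0).rank) n⟩
  have hker : ∀ x, (T (N + 1) x).toLinearMap.ker = (T N x).toLinearMap.ker := fun x => by
    have hcomp : (T (N + 1) x).toLinearMap
        = (T 1 (x + N * α)).toLinearMap ∘ₗ (T N x).toLinearMap := by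
      ext1 v
      rw [add_comm]
      exact hB.toEuclideanCLM_add_apply 1 N x v
    rw [hcomp]
    apply ker_comp_eq_of_finrank_range_le
    rw [← hcomp, finrank_range_toEuclideanCLM, finrank_range_toEuclideanCLM, hrank N x 0,
      hrank (N + 1) x 0]
    exact hN (N + 1)
  obtain ⟨c, hc, hbound⟩ := exists_forall_mem_isCompact_mul_norm_apply_le
    (isCompact_Icc (a := (0 : ℝ)) (b := 1)) (hB.continuous_toEuclideanCLM N)
    (hB.continuous_toEuclideanCLM (N + 1))
    (fun x y => by simp only [finrank_range_toEuclideanCLM, hrank (N + 1) x y])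
    fun x => (hker x).le
  refine ⟨N, c, hc, fun x v => ?_⟩
  have hper : Function.Periodic (fun x => (B N x, B (N + 1) x)) 1 := fun x => by
    simp only [(hB.analytic _).1 x]
  obtain ⟨y, hy, hxy⟩ := hper.exists_mem_Ico₀ one_pos x
  obtain ⟨hN, hN1⟩ := Prod.mk.inj hxy
  rw [hN, hN1]
  exact hbound y ⟨hy.1, hy.2.le⟩ v

theorem pow_mul_opNorm_le (hB : IsCocycle α B) {N : ℕ} {c : ℝ} (hc : 0 ≤ c)
    (h : ∀ x v, c * ‖Matrix.toEuclideanCLM (𝕜 := ℂ) (B N x) v‖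
      ≤ ‖Matrix.toEuclideanCLM (𝕜 := ℂ) (B (N + 1) x) v‖) (n : ℕ) (x : ℝ) :
    c ^ n * ‖Matrix.toEuclideanCLM (𝕜 := ℂ) (B N x)‖
      ≤ ‖Matrix.toEuclideanCLM (𝕜 := ℂ) (B (N + n) x)‖ := by
  induction n with
  | zero => simp
  | succ n ih =>
    have hstep : ‖(c : ℂ) • Matrix.toEuclideanCLM (𝕜 := ℂ) (B (N + n) x)‖
        ≤ ‖Matrix.toEuclideanCLM (𝕜 := ℂ) (B (N + (n + 1)) x)‖ := by
      refine ContinuousLinearMap.opNorm_le_bound _ (norm_nonneg _) fun v => ?_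
      refine le_trans ?_ (ContinuousLinearMap.le_opNorm _ v)
      have hv := h (x + n * α) (Matrix.toEuclideanCLM (𝕜 := ℂ) (B n x) v)
      rw [← hB.toEuclideanCLM_add_apply, ← hB.toEuclideanCLM_add_apply, add_right_comm] at hv
      simpa [norm_smul, abs_of_nonneg hc, ← add_assoc] using hv
    rw [norm_smul, Complex.norm_real, Real.norm_of_nonneg hc] at hstep
    calc c ^ (n + 1) * ‖Matrix.toEuclideanCLM (𝕜 := ℂ) (B N x)‖
      _ = c * (c ^ n * ‖Matrix.toEuclideanCLM (𝕜 := ℂ) (B N x)‖) := by ring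
      _ ≤ c * ‖Matrix.toEuclideanCLM (𝕜 := ℂ) (B (N + n) x)‖ := by gcongr
      _ ≤ _ := hstep

theorem exists_forall_le_opNorm (hB : IsCocycle α B) {N : ℕ} (hne : ∀ x, B N x ≠ 0) :
    ∃ a > 0, ∀ x, a ≤ ‖Matrix.toEuclideanCLM (𝕜 := ℂ) (B N x)‖ := by
  obtain ⟨z, -, hz⟩ := (isCompact_Icc (a := (0 : ℝ)) (b := 1)).exists_isMinOn
    ⟨0, by simp⟩ (hB.continuous_toEuclideanCLM N).norm.continuousOn
  have hz0 : Matrix.toEuclideanCLM (𝕜 := ℂ) (B N z) ≠ 0 :=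
    (map_ne_zero_iff _ (Matrix.toEuclideanCLM (n := Fin d) (𝕜 := ℂ)).injective).2 (hne z)
  refine ⟨_, norm_pos_iff.2 hz0, fun x => ?_⟩
  obtain ⟨y, hy, hxy⟩ := (hB.analytic N).1.exists_mem_Ico₀ one_pos x
  rw [hxy]
  exact hz ⟨hy.1, hy.2.le⟩

end IsCocycle

theorem singVal_one_eq_opNorm {d : ℕ} (A : Matrix (Fin d) (Fin d) ℂ) :
    singVal 1 A = ‖Matrix.toEuclideanCLM (𝕜 := ℂ) A‖ := by
  set T := Matrix.toEuclideanCLM (𝕜 := ℂ) A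
  set S := {t : ℝ | ∃ V : Submodule ℂ (EuclideanSpace ℂ (Fin d)),
    Module.finrank ℂ V = 1 ∧ ∀ v ∈ V, t * ‖v‖ ≤ ‖T v‖}
  have hle : ∀ t ∈ S, t ≤ ‖T‖ := by
    rintro t ⟨V, hV, ht⟩
    obtain ⟨v, hv⟩ := (finrank_eq_one_iff' (V := V)).1 hV
    have hv0 : 0 < ‖(v : EuclideanSpace ℂ (Fin d))‖ := norm_pos_iff.2 (by simpa using hv.1)
    exact le_of_mul_le_mul_right ((ht v v.2).trans (T.le_opNorm v)) hv0
  have hmem : ∀ v ≠ 0, ‖T v‖ / ‖v‖ ∈ S := by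
    refine fun v hv => ⟨ℂ ∙ v, finrank_span_singleton hv, fun w hw => ?_⟩
    obtain ⟨c, rfl⟩ := Submodule.mem_span_singleton.1 hw
    have hv : ‖v‖ ≠ 0 := norm_ne_zero_iff.2 hv
    rw [map_smul, norm_smul, norm_smul]
    field_simp
    rfl
  have hnonneg : 0 ≤ sSup S := by
    rcases S.eq_empty_or_nonempty with hS | ⟨t, V, hV, -⟩
    · simp [hS]
    · exact Real.sSup_nonneg' ⟨0, ⟨V, hV, by simp⟩, le_rfl⟩
  refine le_antisymm (Real.sSup_le hle (norm_nonneg T)) ?_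
  refine T.opNorm_le_bound' hnonneg fun v hv => ?_
  rw [← div_le_iff₀ ((norm_nonneg v).lt_of_ne' hv)]
  exact le_csSup ⟨_, hle⟩ (hmem v (norm_ne_zero_iff.1 hv))

theorem le_elogIntegral {X : Type*} [MeasurableSpace X] {μ : Measure X} [IsProbabilityMeasure μ]
    {g : X → ℝ} {t : ℝ} (hg : ∀ x, Real.exp t ≤ g x) : (t : EReal) ≤ elogIntegral μ g := by
  have hpos : ∀ x, 0 < g x := fun x => (Real.exp_pos t).trans_le (hg x)
  have hlog : ∀ x, t ≤ Real.log (g x) := fun x => (Real.le_log_iff_exp_le (hpos x)).2 (hg x)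
  have hplus : ENNReal.ofReal t ≤ ∫⁻ x, ENNReal.ofReal (Real.log (g x)) ∂μ := by
    simpa using lintegral_mono (μ := μ) fun x => ENNReal.ofReal_le_ofReal (hlog x)
  have hminus : ∫⁻ x, ENNReal.ofReal (-Real.log (g x)) ∂μ ≤ ENNReal.ofReal (-t) := by
    simpa using lintegral_mono (μ := μ) fun x =>
      ENNReal.ofReal_le_ofReal (neg_le_neg (hlog x))
  have hzero : μ {x | g x = 0} = 0 := by simp [(hpos _).ne']
  rw [elogIntegral, if_pos ⟨hzero, (hminus.trans_lt ENNReal.ofReal_lt_top).ne⟩]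
  calc (t : EReal) = (ENNReal.ofReal t : EReal) - (ENNReal.ofReal (-t) : EReal) := by
        rw [EReal.coe_ennreal_ofReal, EReal.coe_ennreal_ofReal, ← EReal.coe_sub,
          max_zero_sub_max_neg_zero_eq_self]
    _ ≤ _ := EReal.sub_le_sub (EReal.coe_ennreal_le_coe_ennreal_iff.2 hplus)
        (EReal.coe_ennreal_le_coe_ennreal_iff.2 hminus)

theorem HasLyapunovExp.log_le {d k : ℕ} {α a c : ℝ} {A : ℝ → Matrix (Fin d) (Fin d) ℂ} {L : EReal}
    (hL : HasLyapunovExp α A k L) (ha : 0 < a) (hc : 0 < c)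
    (h : ∀ᶠ n in atTop, ∀ x, a * c ^ n ≤ singVal k (matIter α A n x)) :
    (Real.log c : EReal) ≤ L := by
  have : IsProbabilityMeasure (volume.restrict (Set.Ioc (0 : ℝ) 1)) := ⟨by simp⟩
  have hlim : Tendsto (fun n : ℕ => (n : ℝ)⁻¹ * Real.log a + Real.log c) atTop
      (𝓝 (Real.log c)) := by
    simpa using (tendsto_inv_atTop_nhds_zero_nat.mul_const (Real.log a)).add_const (Real.log c)
  refine le_of_tendsto_of_tendsto ((continuous_coe_real_ereal.tendsto _).comp hlim) hL ?_
  filter_upwards [h, eventually_ne_atTop 0] with n hn hn0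
  have hlog : Real.log (a * c ^ n) = Real.log a + n * Real.log c := by
    rw [Real.log_mul ha.ne' (by positivity), Real.log_pow]
  have h_integral : ((Real.log (a * c ^ n) : ℝ) : EReal) ≤ elogIntegral
      (volume.restrict (Set.Ioc (0 : ℝ) 1)) fun x => singVal k (matIter α A n x) :=
    le_elogIntegral fun x => (Real.exp_log (by positivity)).trans_le (hn x)
  calc (((n : ℝ)⁻¹ * Real.log a + Real.log c : ℝ) : EReal)
    _ = ((n : ℝ)⁻¹ : ℝ) * ((Real.log (a * c ^ n) : ℝ) : EReal) := by
      rw [← EReal.coe_mul, hlog, mul_add, inv_mul_cancel_left₀ (Nat.cast_ne_zero.2 hn0)]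
    _ ≤ _ := mul_le_mul_of_nonneg_left h_integral (EReal.coe_nonneg.2 (by positivity))

theorem exists_matIter_eq_zero_of_hasLyapunovExp_bot {d : ℕ} {α : ℝ}
    {A : ℝ → Matrix (Fin d) (Fin d) ℂ} (hA : AnalyticPeriodicMat A) (hL : HasLyapunovExp α A 1 ⊥)
    (hrank : ∀ n x y, (matIter α A n x).rank = (matIter α A n y).rank) :
    ∃ s, ∀ x, matIter α A s x = 0 := by
  have hcoc := isCocycle_matIter α hA
  obtain ⟨N, c, hc, hstep⟩ := hcoc.exists_mul_norm_apply_le_norm_succ_apply hrank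
  by_contra! hne
  have hneN : ∀ x, matIter α A N x ≠ 0 := fun x => by
    obtain ⟨y, hy⟩ := hne N
    rwa [Ne, ← matrix_rank_eq_zero_iff, hrank N x y, matrix_rank_eq_zero_iff]
  obtain ⟨a, ha, hlower⟩ := hcoc.exists_forall_le_opNorm hneN
  refine (EReal.bot_lt_coe (Real.log c)).not_ge (hL.log_le (a := a / c ^ N) (by positivity) hc ?_)
  filter_upwards [eventually_ge_atTop N] with m hm x
  obtain ⟨n, rfl⟩ := Nat.exists_eq_add_of_le hm
  rw [singVal_one_eq_opNorm]
  calc a / c ^ N * c ^ (N + n) = c ^ n * a := by field_simp; ring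
    _ ≤ c ^ n * ‖Matrix.toEuclideanCLM (𝕜 := ℂ) (matIter α A N x)‖ := by gcongr; exact hlower x
    _ ≤ _ := hcoc.pow_mul_opNorm_le hc.le hstep n x

/-! ### Nilpotent Jordan matrices -/

/-- The matrix with entries `ε` on the superdiagonal and zeros elsewhere; the last entry of `ε` is
irrelevant. -/
def superdiagonal {R : Type*} [Zero R] {r : ℕ} (ε : Fin r → R) : Matrix (Fin r) (Fin r) R :=
  Matrix.of fun i j => if (j : ℕ) = i + 1 then ε i else 0

section superdiagonal

variable {R m : Type*} [NonUnitalNonAssocSemiring R] {q : ℕ}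

theorem mul_superdiagonal_zero (A : Matrix m (Fin (q + 1)) R) (ε : Fin (q + 1) → R) (i : m) :
    (A * superdiagonal ε) i 0 = 0 := by
  simp [Matrix.mul_apply, superdiagonal]

theorem mul_superdiagonal_succ (A : Matrix m (Fin (q + 1)) R) (ε : Fin (q + 1) → R) (i : m)
    (k : Fin q) : (A * superdiagonal ε) i k.succ = A i k.castSucc * ε k.castSucc := by
  have hk : ∀ j : Fin (q + 1), (k : ℕ) = j ↔ k.castSucc = j := fun j => by simp [Fin.ext_iff]
  simp [Matrix.mul_apply, superdiagonal, hk]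

theorem superdiagonal_mul_last (A : Matrix (Fin (q + 1)) m R) (ε : Fin (q + 1) → R) (i : m) :
    (superdiagonal ε * A) (Fin.last q) i = 0 := by
  have hlast : ∀ j : Fin (q + 1), (j : ℕ) ≠ q + 1 := fun j => j.2.ne
  simp [Matrix.mul_apply, superdiagonal, hlast]

theorem superdiagonal_mul_castSucc (A : Matrix (Fin (q + 1)) m R) (ε : Fin (q + 1) → R)
    (k : Fin q) (i : m) :
    (superdiagonal ε * A) k.castSucc i = ε k.castSucc * A k.succ i := by
  have hk : ∀ j : Fin (q + 1), (j : ℕ) = k + 1 ↔ j = k.succ := fun j => by simp [Fin.ext_iff]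
  simp [Matrix.mul_apply, superdiagonal, hk]

end superdiagonal

theorem superdiagonal_append {R : Type*} [Zero R] {p r : ℕ} {δ : Fin p → R}
    (hδ : ∀ i : Fin p, (i : ℕ) + 1 = p → δ i = 0) (ε : Fin r → R) :
    superdiagonal (Fin.append δ ε) = (Matrix.fromBlocks (superdiagonal δ) 0 0
      (superdiagonal ε)).submatrix finSumFinEquiv.symm finSumFinEquiv.symm := by
  ext i j
  obtain ⟨i, rfl⟩ := finSumFinEquiv.surjective i
  obtain ⟨j, rfl⟩ := finSumFinEquiv.surjective j
  rcases i with i | i <;> rcases j with j | j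
  · simp [superdiagonal]
  · have hlast : p + (j : ℕ) = i + 1 → δ i = 0 := fun h => hδ i (by omega)
    simpa [superdiagonal] using hlast
  · have hne : (j : ℕ) ≠ p + i + 1 := by omega
    simp [superdiagonal, hne]
  · simp [superdiagonal, add_assoc]

theorem rank_superdiagonal {K : Type*} [Field K] [DecidableEq K] {r : ℕ} {ε : Fin r → K}
    (hε : ∀ i : Fin r, (i : ℕ) + 1 = r → ε i = 0) :
    (superdiagonal ε).rank = Fintype.card {i // ε i ≠ 0} := by
  rcases r with _ | q
  · simp [Subsingleton.elim (superdiagonal ε) 0]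
  have hdiag : superdiagonal ε * (superdiagonal 1)ᵀ = Matrix.diagonal ε := by
    ext i k
    rcases i.eq_castSucc_or_eq_last with ⟨i, rfl⟩ | rfl
    · rw [superdiagonal_mul_castSucc]
      simp [superdiagonal, Matrix.diagonal_apply, Fin.ext_iff]
    · simp [superdiagonal_mul_last, Matrix.diagonal_apply, hε]
  have hsuper : Matrix.diagonal ε * superdiagonal 1 = superdiagonal ε := by
    ext i k
    simp [superdiagonal]
  rw [← Matrix.rank_diagonal]
  refine le_antisymm ?_ ?_
  · rw [← hsuper]
    exact Matrix.rank_mul_le_left _ _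
  · rw [← hdiag]
    exact Matrix.rank_mul_le_left _ _

theorem rank_mul_mul_of_mul_eq_one {K a b m n : Type*} [Field K] [Fintype a] [Fintype b]
    [Fintype m] [Fintype n] [DecidableEq m] [DecidableEq n] {U : Matrix a m K} {L : Matrix m a K}
    {V : Matrix n b K} {W : Matrix b n K} (hLU : L * U = 1) (hVW : V * W = 1) (A : Matrix m n K) :
    (U * A * V).rank = A.rank := by
  refine le_antisymm ((Matrix.rank_mul_le_left _ _).trans (Matrix.rank_mul_le_right _ _)) ?_
  have hA : L * (U * A * V) * W = A := by
    rw [Matrix.mul_assoc U, ← Matrix.mul_assoc L, hLU, Matrix.one_mul, Matrix.mul_assoc, hVW,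
      Matrix.mul_one]
  calc A.rank = (L * (U * A * V) * W).rank := by rw [hA]
    _ ≤ (U * A * V).rank := (Matrix.rank_mul_le_left _ _).trans (Matrix.rank_mul_le_right _ _)

theorem rank_eq_rank_mul_add_rank_mul_one_sub {K m n : Type*} [Field K] [Fintype m] [Fintype n]
    [DecidableEq n] {A : Matrix m n K} {R' : Matrix m m K} {R : Matrix n n K}
    (hR : IsIdempotentElem R) (hA : R' * A = A * R) :
    A.rank = (A * R).rank + (A * (1 - R)).rank := by
  have hsup : (A * R).mulVecLin.range ⊔ (A * (1 - R)).mulVecLin.range = A.mulVecLin.range := by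
    simp only [Matrix.mulVecLin_mul]
    refine le_antisymm (sup_le (LinearMap.range_comp_le_range _ _)
      (LinearMap.range_comp_le_range _ _)) ?_
    rintro _ ⟨v, rfl⟩
    refine Submodule.mem_sup.2 ⟨_, ⟨v, rfl⟩, _, ⟨v, rfl⟩, ?_⟩
    simp [Matrix.mulVec_sub]
  have hdisj : Disjoint (A * R).mulVecLin.range (A * (1 - R)).mulVecLin.range := by
    rw [Submodule.disjoint_def]
    rintro _ ⟨v, rfl⟩ ⟨w, hw⟩
    have hv : R' *ᵥ ((A * R) *ᵥ v) = (A * R) *ᵥ v := by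
      rw [Matrix.mulVec_mulVec, ← Matrix.mul_assoc, hA, Matrix.mul_assoc, hR.eq]
    have hw0 : R' *ᵥ ((A * (1 - R)) *ᵥ w) = 0 := by
      rw [Matrix.mulVec_mulVec, ← Matrix.mul_assoc, hA, Matrix.mul_assoc, hR.mul_one_sub_self,
        Matrix.mul_zero, Matrix.zero_mulVec]
    simp only [Matrix.mulVecLin_apply] at hw ⊢
    rw [← hv, ← hw, hw0]
  rw [Matrix.rank, Matrix.rank, Matrix.rank, ← hsup, ← Submodule.finrank_sup_add_finrank_inf_eq,
    hdisj.eq_bot, finrank_bot, add_zero]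

/-! ### Invariant subbundles and their frames -/

/-- An analytic family of projections commuting with the cocycle: the ranges and the kernels of
`E x` form complementary invariant subbundles. -/
structure IsInvariantProjection {d : ℕ} (α : ℝ) (B : ℕ → ℝ → Matrix (Fin d) (Fin d) ℂ)
    (E : ℝ → Matrix (Fin d) (Fin d) ℂ) : Prop where
  analytic : AnalyticPeriodicMat E
  isIdempotentElem : ∀ x, IsIdempotentElem (E x)
  map_mul : ∀ (n : ℕ) (x : ℝ), E (x + n * α) * B n x = B n x * E x

namespace IsInvariantProjection

variable {d : ℕ} {α : ℝ} {B : ℕ → ℝ → Matrix (Fin d) (Fin d) ℂ}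
  {E : ℝ → Matrix (Fin d) (Fin d) ℂ}

theorem one_sub (hE : IsInvariantProjection α B E) :
    IsInvariantProjection α B fun x => 1 - E x where
  analytic := (AnalyticPeriodicMat.const 1).sub hE.analytic
  isIdempotentElem x := (hE.isIdempotentElem x).one_sub
  map_mul n x := by
    rw [Matrix.sub_mul, Matrix.mul_sub, hE.map_mul, Matrix.one_mul, Matrix.mul_one]

theorem map_mul_zero (hE : IsInvariantProjection α B E) (x : ℝ) : E x * B 0 x = B 0 x * E x := by
  simpa using hE.map_mul 0 x

theorem map_mul_one (hE : IsInvariantProjection α B E) (x : ℝ) :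
    E (x + α) * B 1 x = B 1 x * E x := by
  simpa using hE.map_mul 1 x

theorem isCocycle_mul (hE : IsInvariantProjection α B E) (hB : IsCocycle α B) :
    IsCocycle α fun n x => B n x * E x := by
  refine ⟨fun n => (hB.analytic n).mul hE.analytic, fun j k x => ?_⟩
  rw [hB.map_add, Matrix.mul_assoc (B j _) (E _), ← Matrix.mul_assoc (E _), hE.map_mul,
    Matrix.mul_assoc (B k x) (E x), (hE.isIdempotentElem x).eq, Matrix.mul_assoc]

end IsInvariantProjection

/-- Analytic frames `U` whose column spans form an invariant subbundle on which the cocycle acts by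
the constant matrix `J`. The dual frame `V`, equivariant as well, makes `1 - U * V` a projection
onto an invariant complement. -/
structure IsFrame {d r : ℕ} (α : ℝ) (B : ℕ → ℝ → Matrix (Fin d) (Fin d) ℂ)
    (J : Matrix (Fin r) (Fin r) ℂ) (U : ℝ → Matrix (Fin d) (Fin r) ℂ)
    (V : ℝ → Matrix (Fin r) (Fin d) ℂ) : Prop where
  analytic_left : AnalyticPeriodicMat U
  analytic_right : AnalyticPeriodicMat V
  mul_eq_one : ∀ x, V x * U x = 1
  iterate_zero_mul : ∀ x, B 0 x * U x = U x
  mul_iterate_zero : ∀ x, V x * B 0 x = V x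
  iterate_one_mul : ∀ x, B 1 x * U x = U (x + α) * J
  mul_iterate_one : ∀ x, V (x + α) * B 1 x = J * V x

namespace IsFrame

variable {d r : ℕ} {α : ℝ} {B : ℕ → ℝ → Matrix (Fin d) (Fin d) ℂ} {J : Matrix (Fin r) (Fin r) ℂ}
  {U : ℝ → Matrix (Fin d) (Fin r) ℂ} {V : ℝ → Matrix (Fin r) (Fin d) ℂ}

theorem iterate_mul (h : IsFrame α B J U V) (hB : IsCocycle α B) (n : ℕ) (x : ℝ) :
    B n x * U x = U (x + n * α) * J ^ n := by
  induction n with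
  | zero => simpa using h.iterate_zero_mul x
  | succ n ih =>
    have hshift : x + ↑(n + 1) * α = x + n * α + α := by push_cast; ring
    rw [add_comm, hB.map_add, Matrix.mul_assoc, ih, ← Matrix.mul_assoc, h.iterate_one_mul,
      Matrix.mul_assoc, ← pow_succ', add_comm 1 n, hshift]

theorem mul_iterate (h : IsFrame α B J U V) (hB : IsCocycle α B) (n : ℕ) (x : ℝ) :
    V (x + n * α) * B n x = J ^ n * V x := by
  induction n with
  | zero => simpa using h.mul_iterate_zero x
  | succ n ih =>
    have hshift : x + ↑(n + 1) * α = x + n * α + α := by push_cast; ring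
    rw [hshift, add_comm n 1, hB.map_add, ← Matrix.mul_assoc, h.mul_iterate_one,
      Matrix.mul_assoc, ih, ← Matrix.mul_assoc, ← pow_succ', add_comm 1 n]

theorem isInvariantProjection (h : IsFrame α B J U V) (hB : IsCocycle α B) :
    IsInvariantProjection α B fun x => U x * V x where
  analytic := h.analytic_left.mul h.analytic_right
  isIdempotentElem x := by
    rw [IsIdempotentElem, Matrix.mul_assoc, ← Matrix.mul_assoc (V x), h.mul_eq_one,
      Matrix.one_mul]
  map_mul n x := by
    rw [Matrix.mul_assoc, h.mul_iterate hB, ← Matrix.mul_assoc, ← Matrix.mul_assoc,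
      h.iterate_mul hB]

theorem rank_eq (h : IsFrame α B J U V) (hB : IsCocycle α B) (n : ℕ) (x : ℝ) :
    (B n x).rank = (J ^ n).rank + (B n x * (1 - U x * V x)).rank := by
  have hE := h.isInvariantProjection hB
  rw [rank_eq_rank_mul_add_rank_mul_one_sub (hE.isIdempotentElem x) (hE.map_mul n x),
    ← Matrix.mul_assoc, h.iterate_mul hB,
    rank_mul_mul_of_mul_eq_one (h.mul_eq_one _) (h.mul_eq_one x)]

theorem empty {J : Matrix (Fin 0) (Fin 0) ℂ} : IsFrame α B J (fun _ => 0) fun _ => 0 :=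
  ⟨.const 0, .const 0, fun _ => Subsingleton.elim _ _, fun _ => Subsingleton.elim _ _,
    fun _ => Subsingleton.elim _ _, fun _ => Subsingleton.elim _ _,
    fun _ => Subsingleton.elim _ _⟩

theorem of_isUnit {Φ : ℝ → Matrix (Fin r) (Fin d) ℂ} (hU : AnalyticPeriodicMat U)
    (hΦ : AnalyticPeriodicMat Φ) (hunit : ∀ x, IsUnit (Φ x * U x))
    (hU0 : ∀ x, B 0 x * U x = U x) (hΦ0 : ∀ x, Φ x * B 0 x = Φ x)
    (hU1 : ∀ x, B 1 x * U x = U (x + α) * J) (hΦ1 : ∀ x, Φ (x + α) * B 1 x = J * Φ x) :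
    IsFrame α B J U fun x => (Φ x * U x)⁻¹ * Φ x := by
  have hdet : ∀ x, IsUnit (Φ x * U x).det := fun x =>
    (Matrix.isUnit_iff_isUnit_det _).1 (hunit x)
  have hcomm : ∀ x, (Φ (x + α) * U (x + α))⁻¹ * J = J * (Φ x * U x)⁻¹ := fun x => by
    have hJ : Φ (x + α) * U (x + α) * J = J * (Φ x * U x) := by
      rw [Matrix.mul_assoc, ← hU1, ← Matrix.mul_assoc, hΦ1, Matrix.mul_assoc]
    rw [← Matrix.nonsing_inv_mul_cancel_left _ (J * _) (hdet (x + α)),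
      ← Matrix.mul_assoc (Φ (x + α) * _), hJ, Matrix.mul_nonsing_inv_cancel_right _ _ (hdet x)]
  refine ⟨hU, ((hΦ.mul hU).inv hunit).mul hΦ, fun x => ?_, hU0, fun x => ?_, hU1, fun x => ?_⟩
  · rw [Matrix.mul_assoc, Matrix.nonsing_inv_mul _ (hdet x)]
  · rw [Matrix.mul_assoc, hΦ0]
  · rw [Matrix.mul_assoc, hΦ1, ← Matrix.mul_assoc, hcomm, Matrix.mul_assoc]

theorem fromBlocks {r' : ℕ} {J' : Matrix (Fin r') (Fin r') ℂ}
    {U' : ℝ → Matrix (Fin d) (Fin r') ℂ} {V' : ℝ → Matrix (Fin r') (Fin d) ℂ}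
    (h : IsFrame α B J U V) (h' : IsFrame α B J' U' V') (hVU' : ∀ x, V x * U' x = 0)
    (hV'U : ∀ x, V' x * U x = 0) :
    IsFrame α B
      ((Matrix.fromBlocks J 0 0 J').submatrix finSumFinEquiv.symm finSumFinEquiv.symm)
      (fun x => (Matrix.fromCols (U x) (U' x)).submatrix id finSumFinEquiv.symm)
      (fun x => (Matrix.fromRows (V x) (V' x)).submatrix finSumFinEquiv.symm id) := by
  refine ⟨h.analytic_left.fromCols h'.analytic_left, h.analytic_right.fromRows h'.analytic_right,
    fun x => ?_, fun x => ?_, fun x => ?_, fun x => ?_, fun x => ?_⟩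
  · rw [← Matrix.submatrix_mul _ _ _ _ _ Function.bijective_id, Matrix.fromRows_mul_fromCols,
      h.mul_eq_one, h'.mul_eq_one, hVU', hV'U, Matrix.fromBlocks_one, Matrix.submatrix_one_equiv]
  · rw [← Matrix.submatrix_id_id (B 0 x), ← Matrix.submatrix_mul _ _ _ _ _ Function.bijective_id,
      Matrix.mul_fromCols, h.iterate_zero_mul, h'.iterate_zero_mul]
  · rw [← Matrix.submatrix_id_id (B 0 x), ← Matrix.submatrix_mul _ _ _ _ _ Function.bijective_id,
      Matrix.fromRows_mul, h.mul_iterate_zero, h'.mul_iterate_zero]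
  · rw [← Matrix.submatrix_id_id (B 1 x), ← Matrix.submatrix_mul _ _ _ _ _ Function.bijective_id,
      Matrix.submatrix_mul_equiv, Matrix.mul_fromCols, h.iterate_one_mul, h'.iterate_one_mul,
      Matrix.fromCols_mul_fromBlocks]
    simp
  · rw [← Matrix.submatrix_id_id (B 1 x), ← Matrix.submatrix_mul _ _ _ _ _ Function.bijective_id,
      Matrix.submatrix_mul_equiv, Matrix.fromRows_mul, h.mul_iterate_one, h'.mul_iterate_one,
      Matrix.fromBlocks_mul_fromRows]
    simp

end IsFrame

namespace IsInvariantProjection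

variable {d r : ℕ} {α : ℝ} {B : ℕ → ℝ → Matrix (Fin d) (Fin d) ℂ}
  {E : ℝ → Matrix (Fin d) (Fin d) ℂ} {J : Matrix (Fin r) (Fin r) ℂ}
  {M : ℝ → Matrix (Fin d) (Fin r) ℂ} {N : ℝ → Matrix (Fin r) (Fin d) ℂ}

theorem mul_frame (hE : IsInvariantProjection α B E)
    (h : IsFrame α (fun n x => B n x * E x) J M N) (x : ℝ) : E x * M x = M x := by
  rw [← h.iterate_zero_mul x, ← Matrix.mul_assoc, ← Matrix.mul_assoc, hE.map_mul_zero,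
    Matrix.mul_assoc (B 0 x), (hE.isIdempotentElem x).eq]

theorem dualFrame_mul (hE : IsInvariantProjection α B E)
    (h : IsFrame α (fun n x => B n x * E x) J M N) (x : ℝ) : N x * E x = N x := by
  rw [← h.mul_iterate_zero x, Matrix.mul_assoc, Matrix.mul_assoc, (hE.isIdempotentElem x).eq]

theorem isFrame (hE : IsInvariantProjection α B E)
    (h : IsFrame α (fun n x => B n x * E x) J M N) : IsFrame α B J M N := by
  refine ⟨h.analytic_left, h.analytic_right, h.mul_eq_one, fun x => ?_, fun x => ?_, fun x => ?_,
    fun x => ?_⟩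
  · have hM := h.iterate_zero_mul x
    rwa [Matrix.mul_assoc, hE.mul_frame h] at hM
  · have hN := h.mul_iterate_zero x
    rwa [← hE.map_mul_zero, ← Matrix.mul_assoc, hE.dualFrame_mul h] at hN
  · have hM := h.iterate_one_mul x
    rwa [Matrix.mul_assoc, hE.mul_frame h] at hM
  · have hN := h.mul_iterate_one x
    rwa [← hE.map_mul_one, ← Matrix.mul_assoc, hE.dualFrame_mul h] at hN

end IsInvariantProjection

theorem IsFrame.fromBlocks_compl {d r r' : ℕ} {α : ℝ} {B : ℕ → ℝ → Matrix (Fin d) (Fin d) ℂ}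
    {J : Matrix (Fin r) (Fin r) ℂ} {J' : Matrix (Fin r') (Fin r') ℂ}
    {U : ℝ → Matrix (Fin d) (Fin r) ℂ} {V : ℝ → Matrix (Fin r) (Fin d) ℂ}
    {M : ℝ → Matrix (Fin d) (Fin r') ℂ} {N : ℝ → Matrix (Fin r') (Fin d) ℂ}
    (h : IsFrame α B J U V) (hB : IsCocycle α B)
    (h' : IsFrame α (fun n x => B n x * (1 - U x * V x)) J' M N) :
    IsFrame α B
      ((Matrix.fromBlocks J 0 0 J').submatrix finSumFinEquiv.symm finSumFinEquiv.symm)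
      (fun x => (Matrix.fromCols (U x) (M x)).submatrix id finSumFinEquiv.symm)
      (fun x => (Matrix.fromRows (V x) (N x)).submatrix finSumFinEquiv.symm id) := by
  have hF := (h.isInvariantProjection hB).one_sub
  refine h.fromBlocks (hF.isFrame h') (fun x => ?_) fun x => ?_
  · rw [← hF.mul_frame h', ← Matrix.mul_assoc, Matrix.mul_sub, ← Matrix.mul_assoc, h.mul_eq_one,
      Matrix.mul_one, Matrix.one_mul, sub_self, Matrix.zero_mul]
  · rw [← hF.dualFrame_mul h', Matrix.mul_assoc, Matrix.sub_mul, Matrix.mul_assoc, h.mul_eq_one,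
      Matrix.one_mul, Matrix.mul_one, sub_self, Matrix.mul_zero]

/-! ### Jordan chains -/

section chain

variable {R m : Type*} {q : ℕ}

theorem isUnit_of_rows_mul_of_columns [CommRing R] [Fintype m] {φ : ℕ → Matrix (Fin 1) m R}
    {u : ℕ → Matrix m (Fin 1) R} (hzero : ∀ j k, q < j + k → φ j * u k = 0)
    (hone : ∀ j k, j + k = q → φ j * u k = 1) :
    IsUnit ((Matrix.of fun (j : Fin (q + 1)) i => φ j 0 i) *
      (Matrix.of fun i (k : Fin (q + 1)) => u (q - k) i 0)) := by
  set G := (Matrix.of fun (j : Fin (q + 1)) i => φ j 0 i) *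
    (Matrix.of fun i (k : Fin (q + 1)) => u (q - k) i 0)
  have hentry : ∀ j k : Fin (q + 1), G j k = (φ j * u (q - k)) 0 0 := fun _ _ => rfl
  have htri : G.IsUpperTriangular := fun j k hkj => by
    have hkj : k < j := hkj
    rw [hentry, hzero _ _ (by omega), Matrix.zero_apply]
  have hdiag : ∀ j, G j j = 1 := fun j => by
    rw [hentry, hone _ _ (by omega), Matrix.one_apply_eq]
  rw [Matrix.isUnit_iff_isUnit_det, Matrix.det_of_isUpperTriangular htri]
  simp [hdiag]

variable [NonAssocSemiring R]

theorem mul_of_columns_eq_mul_superdiagonal [Fintype m] {A : Matrix m m R}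
    {u u' : ℕ → Matrix m (Fin 1) R} (hA : ∀ k, A * u k = u' (k + 1)) (hu' : u' (q + 1) = 0) :
    A * (Matrix.of fun i (k : Fin (q + 1)) => u (q - k) i 0) =
      (Matrix.of fun i (k : Fin (q + 1)) => u' (q - k) i 0) *
        superdiagonal fun i : Fin (q + 1) => if i = Fin.last q then (0 : R) else 1 := by
  ext i k
  change (A * u (q - k)) i 0 = _
  rw [hA]
  rcases k.eq_zero_or_eq_succ with rfl | ⟨k, rfl⟩
  · simp [mul_superdiagonal_zero, hu']
  · have hk : q - (k + 1) + 1 = q - k := by omega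
    simp [mul_superdiagonal_succ, hk]

theorem of_rows_mul_eq_superdiagonal_mul [Fintype m] {A : Matrix m m R}
    {φ φ' : ℕ → Matrix (Fin 1) m R} (hA : ∀ j, φ' j * A = φ (j + 1)) (hφ : φ (q + 1) = 0) :
    (Matrix.of fun (j : Fin (q + 1)) i => φ' j 0 i) * A =
      (superdiagonal fun i : Fin (q + 1) => if i = Fin.last q then (0 : R) else 1) *
        Matrix.of fun (j : Fin (q + 1)) i => φ j 0 i := by
  ext j i
  change (φ' j * A) 0 i = _
  rw [hA]
  rcases j.eq_castSucc_or_eq_last with ⟨j, rfl⟩ | rfl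
  · simp [superdiagonal_mul_castSucc]
  · simp [superdiagonal_mul_last, hφ]

end chain

namespace IsCocycle

variable {d : ℕ} {α : ℝ} {B : ℕ → ℝ → Matrix (Fin d) (Fin d) ℂ}

theorem exists_orbit_ne_zero (hB : IsCocycle α B) {q : ℕ} (hq : ∀ x, B q x ≠ 0) :
    ∃ u : ℕ → ℝ → Matrix (Fin d) (Fin 1) ℂ, (∀ m, AnalyticPeriodicMat (u m)) ∧
      (∀ n m x, B n x * u m x = u (n + m) (x + n * α)) ∧ ∀ x, u q x ≠ 0 := by
  obtain ⟨v, hv⟩ := exists_forall_mulVec_ne_zero (hB.analytic q).contDiff hq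
  refine ⟨fun m x => B m (x + -(m * α)) * Matrix.replicateCol (Fin 1) v,
    fun m => ((hB.analytic m).comp_add_right _).mul (.const _), fun n m x => ?_, fun x hx => ?_⟩
  · beta_reduce
    have hbase : x + n * α + -(↑(n + m) * α) = x + -(m * α) := by push_cast; ring
    rw [← Matrix.mul_assoc, hbase, hB.map_add, neg_add_cancel_right]
  · refine hv (x + -(q * α)) (funext fun i => ?_)
    exact congrFun (congrFun hx i) 0

theorem exists_dual_orbit (hB : IsCocycle α B) {u : ℝ → Matrix (Fin d) (Fin 1) ℂ}
    (hu : AnalyticPeriodicMat u) (hu0 : ∀ x, u x ≠ 0) (hBu : ∀ x, B 0 x * u x = u x) :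
    ∃ φ : ℕ → ℝ → Matrix (Fin 1) (Fin d) ℂ, (∀ j, AnalyticPeriodicMat (φ j)) ∧
      (∀ (j n : ℕ) x, φ j (x + n * α) * B n x = φ (j + n) x) ∧ ∀ x, φ 0 x * u x = 1 := by
  have hinj : ∀ x, Function.Injective (u x).mulVec := fun x => by
    refine Matrix.mulVec_injective_iff.2 (linearIndependent_unique_iff.2 fun hcol => hu0 x ?_)
    ext i j
    rw [Subsingleton.elim j default]
    exact congrFun hcol i
  obtain ⟨ψ, hψ, hψu⟩ := hu.exists_left_inverse hinj
  refine ⟨fun j x => ψ (x + j * α) * B j x, fun j => (hψ.comp_add_right _).mul (hB.analytic j),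
    fun j n x => ?_, fun x => ?_⟩
  · have hbase : x + n * α + j * α = x + ↑(j + n) * α := by push_cast; ring
    rw [Matrix.mul_assoc, ← hB.map_add, hbase]
  · simp [Matrix.mul_assoc, hBu, hψu]

-- As `B (q + 1) = 0`, the dual orbit `φ` pairs with the orbit `u`, taken in reverse order, to an
-- upper unitriangular matrix.
theorem exists_isFrame_superdiagonal (hB : IsCocycle α B) {q : ℕ} (hq : ∀ x, B q x ≠ 0)
    (hq1 : ∀ x, B (q + 1) x = 0) :
    ∃ U V, IsFrame α B
      (superdiagonal fun i : Fin (q + 1) => if i = Fin.last q then 0 else 1) U V := by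
  obtain ⟨u, hu, hBu, huq⟩ := hB.exists_orbit_ne_zero hq
  have hBu0 : ∀ m x, B 0 x * u m x = u m x := fun m x => by simpa using hBu 0 m x
  have hBu1 : ∀ m x, B 1 x * u m x = u (m + 1) (x + α) := fun m x => by
    simpa [add_comm] using hBu 1 m x
  obtain ⟨φ, hφ, hφB, hφu⟩ := hB.exists_dual_orbit (hu q) huq (hBu0 q)
  have hφB0 : ∀ j x, φ j x * B 0 x = φ j x := fun j x => by simpa using hφB j 0 x
  have hφB1 : ∀ j x, φ j (x + α) * B 1 x = φ (j + 1) x := fun j x => by simpa using hφB j 1 x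
  have hu0 : ∀ m, q < m → ∀ x, u m x = 0 := fun m hm x => by
    simpa [hB.eq_zero_of_le hq1 hm] using (hBu m 0 (x - m * α)).symm
  have hφ0 : ∀ x, φ (q + 1) x = 0 := fun x => by simpa [hq1] using (hφB 0 (q + 1) x).symm
  have hpair : ∀ j m x, φ j x * u m x = φ 0 (x + j * α) * u (j + m) (x + j * α) := fun j m x => by
    rw [← hBu, ← Matrix.mul_assoc, hφB, zero_add]
  have hunit := fun x => isUnit_of_rows_mul_of_columns (q := q) (φ := (φ · x)) (u := (u · x))
    (fun j m hjm => by rw [hpair, hu0 _ hjm, Matrix.mul_zero])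
    (fun j m hjm => by rw [hpair, hjm, hφu])
  refine ⟨_, _, IsFrame.of_isUnit (.of_columns fun k : Fin (q + 1) => hu (q - k))
    (.of_rows fun j : Fin (q + 1) => hφ j) hunit (fun x => ?_) (fun x => ?_) (fun x => ?_)
    fun x => ?_⟩
  · ext i k
    exact congrFun (congrFun (hBu0 (q - k) x) i) 0
  · ext j i
    exact congrFun (congrFun (hφB0 j x) 0) i
  · exact mul_of_columns_eq_mul_superdiagonal (u := (u · x)) (u' := (u · (x + α))) (hBu1 · x)
      (hu0 _ q.lt_add_one _)
  · exact of_rows_mul_eq_superdiagonal_mul (φ := (φ · x)) (φ' := (φ · (x + α))) (hφB1 · x) (hφ0 x)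

end IsCocycle

/-- The conditions on the superdiagonal entries of a matrix in nilpotent Jordan normal form. The
irrelevant last entry is set to zero, so that appending two such sequences starts a new block. -/
structure IsJordanWeight {r : ℕ} (ε : Fin r → ℂ) : Prop where
  eq_zero_or_eq_one : ∀ i, ε i = 0 ∨ ε i = 1
  last_eq_zero : ∀ i : Fin r, (i : ℕ) + 1 = r → ε i = 0

namespace IsJordanWeight

theorem empty : IsJordanWeight Fin.elim0 :=
  ⟨fun i => i.elim0, fun i => i.elim0⟩

theorem ite_eq_last (q : ℕ) :
    IsJordanWeight fun i : Fin (q + 1) => if i = Fin.last q then 0 else 1 where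
  eq_zero_or_eq_one i := by split_ifs <;> simp
  last_eq_zero i hi := if_pos (Fin.ext (Nat.succ_injective hi))

theorem append {p r : ℕ} {δ : Fin p → ℂ} {ε : Fin r → ℂ} (hδ : IsJordanWeight δ)
    (hε : IsJordanWeight ε) : IsJordanWeight (Fin.append δ ε) where
  eq_zero_or_eq_one i := by
    induction i using Fin.addCases with
    | left i => simpa using hδ.eq_zero_or_eq_one i
    | right i => simpa using hε.eq_zero_or_eq_one i
  last_eq_zero i hi := by
    induction i using Fin.addCases with
    | left i => simpa using hδ.last_eq_zero i (by simp at hi; omega)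
    | right i => simpa using hε.last_eq_zero i (by simp at hi; omega)

theorem card_eq_one_eq_rank {r : ℕ} {ε : Fin r → ℂ} (hε : IsJordanWeight ε) :
    (Finset.univ.filter fun i => ε i = 1).card = (superdiagonal ε).rank := by
  rw [rank_superdiagonal hε.last_eq_zero, Fintype.card_subtype]
  congr! 2 with i
  rcases hε.eq_zero_or_eq_one i with h | h <;> simp [h]

end IsJordanWeight

theorem exists_ne_zero_and_succ_eq_zero {d : ℕ} {B : ℕ → ℝ → Matrix (Fin d) (Fin d) ℂ}
    (hrank : ∀ n x y, (B n x).rank = (B n y).rank) (hnil : ∃ s, ∀ x, B s x = 0) (hB0 : B 0 0 ≠ 0) :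
    ∃ q, (∀ x, B q x ≠ 0) ∧ ∀ x, B (q + 1) x = 0 := by
  have hzero : ∀ n x, B n x = 0 ↔ B n 0 = 0 := fun n x => by
    rw [← matrix_rank_eq_zero_iff, hrank n x 0, matrix_rank_eq_zero_iff]
  simp only [hzero, forall_const, Ne] at hnil ⊢
  by_contra! h
  obtain ⟨s, hs⟩ := hnil
  exact Nat.rec hB0 (fun q => h q) s hs

namespace IsCocycle

variable {d : ℕ} {α : ℝ} {B : ℕ → ℝ → Matrix (Fin d) (Fin d) ℂ}

theorem exists_isFrame_superdiagonal_mul_eq (hB : IsCocycle α B)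
    (hrank : ∀ n x y, (B n x).rank = (B n y).rank) (hnil : ∃ s, ∀ x, B s x = 0) :
    ∃ (r : ℕ) (ε : Fin r → ℂ) (M : ℝ → Matrix (Fin d) (Fin r) ℂ)
      (N : ℝ → Matrix (Fin r) (Fin d) ℂ), IsJordanWeight ε ∧
      IsFrame α B (superdiagonal ε) M N ∧ ∀ x, M x * N x = B 0 x := by
  induction hR : (B 0 0).rank using Nat.strong_induction_on generalizing B with
  | h R ih =>
    by_cases hB0 : B 0 0 = 0
    · refine ⟨0, Fin.elim0, fun _ => 0, fun _ => 0, .empty, .empty, fun x => ?_⟩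
      rw [Matrix.zero_mul, eq_comm, ← matrix_rank_eq_zero_iff, hrank 0 x 0, hB0, Matrix.rank_zero]
    obtain ⟨q, hq, hq1⟩ := exists_ne_zero_and_succ_eq_zero hrank hnil hB0
    obtain ⟨U, V, hUV⟩ := hB.exists_isFrame_superdiagonal hq hq1
    have hcompl := ((hUV.isInvariantProjection hB).one_sub).isCocycle_mul hB
    have hcompl_rank : ∀ n x y,
        (B n x * (1 - U x * V x)).rank = (B n y * (1 - U y * V y)).rank := fun n x y => by
      have hx := hUV.rank_eq hB n x
      rw [hrank n x y, hUV.rank_eq hB n y] at hx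
      exact (Nat.add_left_cancel hx).symm
    have hcompl_lt : (B 0 0 * (1 - U 0 * V 0)).rank < R := by
      have h0 := hUV.rank_eq hB 0 0
      rw [pow_zero, Matrix.rank_one, Fintype.card_fin] at h0
      omega
    obtain ⟨r, ε, M, N, hε, hMN, hMN0⟩ := ih _ hcompl_lt hcompl hcompl_rank
      ⟨q + 1, fun x => by rw [hq1, Matrix.zero_mul]⟩ rfl
    have hδ := IsJordanWeight.ite_eq_last q
    refine ⟨_, _, _, _, hδ.append hε,
      superdiagonal_append hδ.last_eq_zero ε ▸ hUV.fromBlocks_compl hB hMN, fun x => ?_⟩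
    rw [Matrix.submatrix_mul_equiv, Matrix.fromCols_mul_fromRows, hMN0, Matrix.mul_sub,
      ← Matrix.mul_assoc, hUV.iterate_zero_mul, Matrix.mul_one, add_sub_cancel,
      Matrix.submatrix_id_id]

end IsCocycle

/-- If `L₁(α,A) = -∞` and for every `n` the rank of `A_n(x)` is constant in
`x`, then `A` can be analytically conjugated to a constant matrix `J` in nilpotent Jordan
normal form: `J` has entries in `{0,1}`, supported on the superdiagonal, i.e. it is block
diagonal consisting of `m = dim ker A(x)` nilpotent Jordan blocks (equivalently, the number
of `1`s equals `rank A(x) = d - m`). -/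
theorem stmt_2 {d : ℕ} (α : ℝ) (A : ℝ → Matrix (Fin d) (Fin d) ℂ)
    (hA : AnalyticPeriodicMat A)
    (hL1 : HasLyapunovExp α A 1 ⊥)
    (hrank : ∀ (n : ℕ) (x y : ℝ), (matIter α A n x).rank = (matIter α A n y).rank) :
    ∃ (M : ℝ → Matrix (Fin d) (Fin d) ℂ) (ε : Fin d → ℂ),
      AnalyticPeriodicMat M ∧
      (∀ x : ℝ, IsUnit (M x)) ∧
      (∀ i : Fin d, ε i = 0 ∨ ε i = 1) ∧
      (∀ x : ℝ, (Finset.univ.filter fun i : Fin d => ε i = 1).card = (A x).rank) ∧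
      (∀ x : ℝ, (M (x + α))⁻¹ * A x * M x
          = Matrix.of fun i j : Fin d => if (j : ℕ) = (i : ℕ) + 1 then ε i else 0) := by
  obtain ⟨r, ε, M, N, hε, hframe, hMN⟩ :=
    (isCocycle_matIter α hA).exists_isFrame_superdiagonal_mul_eq hrank
      (exists_matIter_eq_zero_of_hasLyapunovExp_bot hA hL1 hrank)
  have hMN : ∀ x, M x * N x = 1 := hMN
  obtain rfl : d = r := by
    simpa using Matrix.square_of_invertible (M 0) (N 0) (hMN 0) (hframe.mul_eq_one 0)
  have hJ : ∀ x, A x * M x = M (x + α) * superdiagonal ε := fun x => by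
    simpa [matIter] using hframe.iterate_one_mul x
  refine ⟨M, ε, hframe.analytic_left, fun x => ?unit, hε.eq_zero_or_eq_one, fun x => ?rank,
    fun x => ?conj⟩
  case unit => exact IsUnit.of_mul_eq_one _ (hMN x)
  case rank =>
    rw [hε.card_eq_one_eq_rank,
      ← rank_mul_mul_of_mul_eq_one (hframe.mul_eq_one (x + α)) (hframe.mul_eq_one x), ← hJ,
      Matrix.mul_assoc, hMN, Matrix.mul_one]
  case conj =>
    rw [Matrix.inv_eq_left_inv (hframe.mul_eq_one _), Matrix.mul_assoc, hJ, ← Matrix.mul_assoc,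
      hframe.mul_eq_one, Matrix.one_mul, superdiagonal]
end

section
/- Let A : ℝ → ℂ^{d×d} be real analytic and 1-periodic and let α ∈ ℝ be such that L₁(α,A) = −∞ (in which case L_k(α,A) = −∞ for all k = 1,…,d). Then there exists a real analytic 1-periodic map A' : ℝ → ℂ^{d×d} such that for every ε ≠ 0 all Lyapunov exponents of the cocycle (α, A + εA') are distinct: L₁(α,A+εA') > L₂(α,A+εA') > … > L_d(α,A+εA'). In particular, there are arbitrarily small analytic perturbations of (α,A) with simple Lyapunov spectrum. -/
open MeasureTheory Filter Topology

/-!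
The `1`-periodic real analytic functions form a principal ideal domain: a proper ideal has a common
zero `x₀`, and a function vanishing at `x₀` is divisible by `e(x) - e(x₀)`. A singular matrix over
this ring therefore kills a vector of some basis, and repeating this in the quotient conjugates the
cocycle to a block triangular one: a strictly upper triangular block, followed by a block with
nonzero determinant `g`. If the second block were present, `∫ log |g| > -∞` would bound `L₁` from
below. Hence `L₁ = -∞` forces `A(x) = U(x + α) T(x) U(x)⁻¹` with `T` strictly upper triangular.

Put `A'(x) = U(x + α) diag(1, e⁻¹, e⁻², …) U(x)⁻¹`. Then `A + εA'` is conjugate to an upper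
triangular cocycle whose diagonal entries have the constant moduli `|ε|, |ε|e⁻¹, |ε|e⁻², …`. A
further conjugation by a diagonal matrix makes the other entries as small as we like, so the
exponents are the logarithms of these moduli.
-/

open scoped Matrix.Norms.L2Operator

section SimpleZeros

variable {𝕜 𝕝 : Type*} [NontriviallyNormedField 𝕜] [NormedField 𝕝] [NormedAlgebra 𝕜 𝕝]

open Classical in
/-- The quotient `f / h` of two functions of one variable, continued to the zeros of `h` by
l'Hôpital's rule. It is meaningful when these zeros are simple and are also zeros of `f`. -/
noncomputable def lhopitalQuotient (f h : 𝕜 → 𝕝) (x : 𝕜) : 𝕝 :=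
  if h x = 0 then deriv f x / deriv h x else f x / h x

lemma mul_lhopitalQuotient {f h : 𝕜 → 𝕝} {x : 𝕜} (hf : h x = 0 → f x = 0) :
    h x * lhopitalQuotient f h x = f x := by
  by_cases hx : h x = 0
  · rw [hf hx, hx, zero_mul]
  · rw [lhopitalQuotient, if_neg hx, mul_div_cancel₀ _ hx]

lemma eq_smul_dslope_of_eq_zero {f : 𝕜 → 𝕝} {x : 𝕜} (hf : f x = 0) (y : 𝕜) :
    f y = (y - x) • dslope f x y := by
  rw [sub_smul_dslope, hf, sub_zero]

lemma analyticAt_dslope_self {f : 𝕜 → 𝕝} {x : 𝕜} (hf : AnalyticAt 𝕜 f x) :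
    AnalyticAt 𝕜 (dslope f x) x :=
  let ⟨_, hp⟩ := hf
  ⟨_, hp.has_fpower_series_dslope_fslope⟩

lemma analyticAt_lhopitalQuotient {f h : 𝕜 → 𝕝} {x : 𝕜} (hf : AnalyticAt 𝕜 f x)
    (hh : AnalyticAt 𝕜 h x) (h_simple : h x = 0 → deriv h x ≠ 0) (hfh : h x = 0 → f x = 0) :
    AnalyticAt 𝕜 (lhopitalQuotient f h) x := by
  by_cases hx : h x = 0
  · have hd : AnalyticAt 𝕜 (dslope h x) x := analyticAt_dslope_self hh
    have hd0 : dslope h x x ≠ 0 := by rw [dslope_same]; exact h_simple hx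
    refine ((analyticAt_dslope_self hf).div hd hd0).congr ?_
    filter_upwards [hd.continuousAt.eventually_ne hd0] with y hy
    rcases eq_or_ne y x with rfl | hyx
    · simp only [Pi.div_apply, dslope_same, lhopitalQuotient, if_pos hx]
    · have h_sub : algebraMap 𝕜 𝕝 (y - x) ≠ 0 := by simpa [sub_ne_zero] using hyx
      have hhy : h y ≠ 0 := by
        rw [eq_smul_dslope_of_eq_zero hx]
        exact smul_ne_zero (sub_ne_zero.2 hyx) hy
      rw [lhopitalQuotient, if_neg hhy, eq_smul_dslope_of_eq_zero hx,
        eq_smul_dslope_of_eq_zero (hfh hx), Algebra.smul_def, Algebra.smul_def,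
        mul_div_mul_left _ _ h_sub, Pi.div_apply]
  · refine (hf.div hh hx).congr ?_
    filter_upwards [hh.continuousAt.eventually_ne hx] with y hy
    rw [lhopitalQuotient, if_neg hy, Pi.div_apply]

end SimpleZeros

/-- The `1`-periodic real analytic functions, as a star subalgebra of `ℝ → ℂ`. -/
noncomputable def periodicAnalyticSubalgebra : StarSubalgebra ℂ (ℝ → ℂ) where
  carrier := {f | Function.Periodic f 1 ∧ ∀ x, AnalyticAt ℝ f x}
  mul_mem' hf hg := ⟨hf.1.mul hg.1, fun x => (hf.2 x).mul (hg.2 x)⟩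
  add_mem' hf hg := ⟨hf.1.add hg.1, fun x => (hf.2 x).add (hg.2 x)⟩
  algebraMap_mem' _ := ⟨fun _ => rfl, fun _ => analyticAt_const⟩
  star_mem' hf := ⟨hf.1.comp star, fun x =>
    (Complex.conjCLE.toContinuousLinearMap.analyticAt _).comp (hf.2 x)⟩

/-- The ring of `1`-periodic real analytic functions `ℝ → ℂ`. -/
abbrev PeriodicAnalytic : Type := periodicAnalyticSubalgebra

namespace PeriodicAnalytic

instance : CoeFun PeriodicAnalytic fun _ => ℝ → ℂ := ⟨Subtype.val⟩

protected lemma periodic (f : PeriodicAnalytic) : Function.Periodic f 1 := f.2.1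

protected lemma analyticAt (f : PeriodicAnalytic) (x : ℝ) : AnalyticAt ℝ f x := f.2.2 x

lemma analyticOnNhd (f : PeriodicAnalytic) : AnalyticOnNhd ℝ f Set.univ :=
  fun x _ => f.analyticAt x

protected lemma continuous (f : PeriodicAnalytic) : Continuous f :=
  continuous_iff_continuousAt.2 fun x => (f.analyticAt x).continuousAt

instance : IsDomain PeriodicAnalytic :=
  have : NoZeroDivisors PeriodicAnalytic := ⟨fun {f g} hfg =>
    (f.analyticOnNhd.eq_zero_or_eq_zero_of_mul_eq_zero g.analyticOnNhd
      (fun x _ => congrFun (congrArg Subtype.val hfg) x) isPreconnected_univ).imp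
        (fun h => Subtype.ext <| funext fun x => h x trivial)
        (fun h => Subtype.ext <| funext fun x => h x trivial)⟩
  NoZeroDivisors.to_isDomain _

lemma isUnit_of_forall_ne_zero {f : PeriodicAnalytic} (hf : ∀ x, f x ≠ 0) : IsUnit f :=
  .of_mul_eq_one ⟨fun x => (f x)⁻¹, fun x => congrArg _ (f.periodic x),
    fun x => (f.analyticAt x).inv (hf x)⟩ <| Subtype.ext <| funext fun x => mul_inv_cancel₀ (hf x)

/-- Evaluation of a periodic analytic function at `x`. -/
noncomputable def eval (x : ℝ) : PeriodicAnalytic →+* ℂ :=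
  (Pi.evalRingHom (fun _ : ℝ => ℂ) x).comp (SubringClass.subtype periodicAnalyticSubalgebra)

/-- The translation `f ↦ f (· + α)` of periodic analytic functions. -/
noncomputable def shift (α : ℝ) : PeriodicAnalytic →+* PeriodicAnalytic where
  toFun f := ⟨fun x => f (x + α), fun x => by simp only [add_right_comm, f.periodic _],
    fun x => (f.analyticAt (x + α)).comp (f := (· + α)) (by fun_prop)⟩
  map_one' := rfl
  map_mul' _ _ := rfl
  map_zero' := rfl
  map_add' _ _ := rfl

lemma eval_shift (α x : ℝ) (f : PeriodicAnalytic) : eval x (shift α f) = eval (x + α) f := rfl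

section PrincipalIdeals

/-- The function `e(x) - e(x₀)`, where `e(x) = exp (2πix)`: it generates the ideal of the functions
that vanish at `x₀`. -/
noncomputable def vanishingAt (x₀ : ℝ) : PeriodicAnalytic :=
  ⟨fun x => Complex.exp (2 * Real.pi * Complex.I * x) - Complex.exp (2 * Real.pi * Complex.I * x₀),
    fun x => by
      simp only [Complex.ofReal_add, Complex.ofReal_one, mul_add, mul_one, Complex.exp_periodic _],
    fun x => by
      have h_lin : AnalyticAt ℝ (fun y : ℝ => (2 * Real.pi * Complex.I * y : ℂ)) x :=
        analyticAt_const.mul (Complex.ofRealCLM.analyticAt x)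
      exact (analyticAt_cexp.restrictScalars.comp h_lin).sub analyticAt_const⟩

lemma vanishingAt_self (x₀ : ℝ) : vanishingAt x₀ x₀ = 0 := sub_self _

lemma deriv_vanishingAt_ne_zero (x₀ x : ℝ) : deriv (vanishingAt x₀) x ≠ 0 := by
  have h_lin : HasDerivAt (fun y : ℝ => (2 * Real.pi * Complex.I * y : ℂ))
      (2 * Real.pi * Complex.I * 1) x :=
    Complex.ofRealCLM.hasDerivAt.const_mul _
  have h_deriv : HasDerivAt (vanishingAt x₀) _ x := h_lin.cexp.sub_const _
  rw [h_deriv.deriv, mul_one]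
  exact mul_ne_zero (Complex.exp_ne_zero _) Complex.two_pi_I_ne_zero

lemma eq_of_vanishingAt_eq_zero (f : PeriodicAnalytic) {x₀ x : ℝ} (hx : vanishingAt x₀ x = 0) :
    f x = f x₀ := by
  obtain ⟨n, hn⟩ := Complex.exp_eq_exp_iff_exists_int.1 (sub_eq_zero.1 hx)
  have hxn : (x : ℂ) = (x₀ + n : ℝ) :=
    mul_left_cancel₀ Complex.two_pi_I_ne_zero (by rw [hn]; push_cast; ring)
  rw [Complex.ofReal_injective hxn]
  simpa only [mul_one] using f.periodic.int_mul n x₀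

lemma vanishingAt_dvd {f : PeriodicAnalytic} {x₀ : ℝ} (hf : f x₀ = 0) : vanishingAt x₀ ∣ f := by
  have hfz (x : ℝ) (hx : vanishingAt x₀ x = 0) : f x = 0 :=
    (f.eq_of_vanishingAt_eq_zero hx).trans hf
  have h_deriv (g : PeriodicAnalytic) (x : ℝ) : deriv g (x + 1) = deriv g x := by
    rw [← deriv_comp_add_const, funext g.periodic]
  refine ⟨⟨lhopitalQuotient f (vanishingAt x₀), fun x => ?_, fun x => ?_⟩, ?_⟩
  · simp only [lhopitalQuotient, h_deriv, f.periodic x, (vanishingAt x₀).periodic x]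
  · exact analyticAt_lhopitalQuotient (f.analyticAt x) ((vanishingAt x₀).analyticAt x)
      (fun _ => deriv_vanishingAt_ne_zero x₀ x) (hfz x)
  · exact Subtype.ext <| funext fun x => (mul_lhopitalQuotient (hfz x)).symm

lemma eq_zero_of_forall_vanishingAt_pow_dvd {f : PeriodicAnalytic} {x₀ : ℝ}
    (hf : ∀ n, vanishingAt x₀ ^ n ∣ f) : f = 0 := by
  have h_order : analyticOrderAt f x₀ = ⊤ := by
    refine ENat.eq_top_iff_forall_ge.2 fun n => (natCast_le_analyticOrderAt (f.analyticAt x₀)).2 ?_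
    obtain ⟨g, rfl⟩ := hf n
    refine ⟨fun x => dslope (vanishingAt x₀) x₀ x ^ n * g x,
      ((analyticAt_dslope_self ((vanishingAt x₀).analyticAt x₀)).pow n).mul (g.analyticAt x₀),
      .of_forall fun x => ?_⟩
    have hx := eq_smul_dslope_of_eq_zero (vanishingAt_self x₀) x
    rw [← smul_mul_assoc, ← smul_pow, ← hx]
    rfl
  exact Subtype.ext ((AnalyticOnNhd.analyticOrderAt_eq_top_iff_eq_zero x₀ f.analyticAt).1 h_order)

lemma exists_forall_mem_eq_zero {I : Ideal PeriodicAnalytic} (hI : I ≠ ⊤) :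
    ∃ x₀ : ℝ, ∀ f ∈ I, f x₀ = 0 := by
  by_contra! h
  choose f hfI hf using h
  obtain ⟨t, -, ht⟩ := (isCompact_Icc (a := (0 : ℝ)) (b := 1)).elim_nhds_subcover
    (fun x => {y | f x y ≠ 0}) fun x _ => (f x).continuous.continuousAt.eventually_ne (hf x)
  let F : PeriodicAnalytic := ∑ x ∈ t, star (f x) * f x
  have hF (y : ℝ) : F y = (∑ x ∈ t, Complex.normSq (f x y) : ℝ) := by
    change eval y F = _
    simp only [F, map_sum, map_mul, Complex.ofReal_sum, Complex.normSq_eq_conj_mul_self]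
    rfl
  refine hI (I.eq_top_of_isUnit_mem (I.sum_mem fun x _ => I.mul_mem_left _ (hfI x))
    (isUnit_of_forall_ne_zero (f := F) fun y => ?_))
  obtain ⟨z, hz, hyz⟩ := F.periodic.exists_mem_Ico₀ one_pos y
  obtain ⟨x, hxt, hx⟩ := Set.mem_iUnion₂.1 (ht ⟨hz.1, hz.2.le⟩)
  rw [hyz, hF, Complex.ofReal_ne_zero]
  have h_pos : 0 < ∑ x ∈ t, Complex.normSq (f x z) :=
    Finset.sum_pos' (fun _ _ => Complex.normSq_nonneg _) ⟨x, hxt, Complex.normSq_pos.2 hx⟩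
  exact h_pos.ne'

instance : IsPrincipalIdealRing PeriodicAnalytic := by
  refine .of_prime_ne_bot fun P hP hP_bot => ?_
  obtain ⟨x₀, hx₀⟩ := exists_forall_mem_eq_zero hP.ne_top
  suffices h_mem : vanishingAt x₀ ∈ P from
    ⟨vanishingAt x₀, le_antisymm
      (fun f hf => Ideal.mem_span_singleton.2 (vanishingAt_dvd (hx₀ f hf)))
      ((Ideal.span_singleton_le_iff_mem _).2 h_mem)⟩
  by_contra h_notMem
  obtain ⟨f, hf, hf0⟩ := Submodule.exists_mem_ne_zero_of_ne_bot hP_bot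
  have h_factor (n : ℕ) : ∃ g ∈ P, f = vanishingAt x₀ ^ n * g := by
    induction n with
    | zero => exact ⟨f, hf, by rw [pow_zero, one_mul]⟩
    | succ n ih =>
      obtain ⟨g, hg, rfl⟩ := ih
      obtain ⟨k, rfl⟩ := vanishingAt_dvd (hx₀ g hg)
      exact ⟨k, (hP.mem_or_mem hg).resolve_left h_notMem, by rw [pow_succ, mul_assoc]⟩
  exact hf0 <| eq_zero_of_forall_vanishingAt_pow_dvd fun n =>
    let ⟨g, _, hg⟩ := h_factor n
    Dvd.intro g hg.symm

end PrincipalIdeals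

section LogIntegral

variable {f : PeriodicAnalytic}

lemma shift_ne_zero (hf : f ≠ 0) (α : ℝ) : shift α f ≠ 0 := by
  contrapose! hf
  ext x
  simpa [shift] using congrFun (congrArg Subtype.val hf) (x - α)

lemma ae_ne_zero (hf : f ≠ 0) : ∀ᵐ x, f x ≠ 0 := by
  obtain ⟨x, hx⟩ : ∃ x, f x ≠ 0 := by
    contrapose! hf
    exact Subtype.ext (funext hf)
  have h_codiscrete := ae_restrict_le_codiscreteWithin (μ := volume) MeasurableSet.univ
    (f.analyticOnNhd.preimage_zero_mem_codiscrete hx)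
  rwa [Measure.restrict_univ] at h_codiscrete

lemma integrableOn_log_norm (f : PeriodicAnalytic) :
    IntegrableOn (fun x => Real.log ‖f x‖) (Set.Ioc 0 1) :=
  (intervalIntegrable_iff_integrableOn_Ioc_of_le zero_le_one).1 <|
    MeromorphicOn.intervalIntegrable_log_norm fun x _ => (f.analyticAt x).meromorphicAt

lemma integral_log_norm_shift (f : PeriodicAnalytic) (α : ℝ) :
    ∫ x in Set.Ioc (0 : ℝ) 1, Real.log ‖shift α f x‖ =
      ∫ x in Set.Ioc (0 : ℝ) 1, Real.log ‖f x‖ := by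
  have h_per : Function.Periodic (fun x => Real.log ‖f x‖) 1 := f.periodic.comp (Real.log ‖·‖)
  rw [← intervalIntegral.integral_of_le zero_le_one, ← intervalIntegral.integral_of_le zero_le_one]
  calc ∫ x in (0 : ℝ)..1, Real.log ‖f (x + α)‖ = ∫ x in (0 + α)..(1 + α), Real.log ‖f x‖ :=
        intervalIntegral.integral_comp_add_right (fun x => Real.log ‖f x‖) α
    _ = ∫ x in (0 : ℝ)..1, Real.log ‖f x‖ := by
        rw [zero_add, add_comm 1, h_per.intervalIntegral_add_eq α 0, zero_add]

lemma integrableOn_sum_log_norm (f : PeriodicAnalytic) (α : ℝ) (n : ℕ) :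
    IntegrableOn (fun x => ∑ i ∈ Finset.range n, Real.log ‖f (x + i * α)‖) (Set.Ioc 0 1) :=
  integrable_finsetSum _ fun i _ => integrableOn_log_norm (shift (i * α) f)

lemma integral_sum_log_norm (f : PeriodicAnalytic) (α : ℝ) (n : ℕ) :
    ∫ x in Set.Ioc (0 : ℝ) 1, ∑ i ∈ Finset.range n, Real.log ‖f (x + i * α)‖ =
      n * ∫ x in Set.Ioc (0 : ℝ) 1, Real.log ‖f x‖ := by
  have h_shift (i : ℕ) : ∫ x in Set.Ioc (0 : ℝ) 1, Real.log ‖f (x + i * α)‖ =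
      ∫ x in Set.Ioc (0 : ℝ) 1, Real.log ‖f x‖ := integral_log_norm_shift f (i * α)
  rw [integral_finsetSum (f := fun (i : ℕ) x => Real.log ‖f (x + i * α)‖) _
    fun i _ => integrableOn_log_norm (shift (i * α) f)]
  simp only [h_shift, Finset.sum_const, Finset.card_range, nsmul_eq_mul]

end LogIntegral

section Matrix

variable {m n : Type*}

/-- The value at `x` of a matrix of periodic analytic functions. -/
noncomputable def evalMatrix (x : ℝ) (M : Matrix m n PeriodicAnalytic) : Matrix m n ℂ :=
  M.map (eval x)

lemma analyticPeriodicMat_iff {d e : ℕ} {A : ℝ → Matrix (Fin d) (Fin e) ℂ} :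
    AnalyticPeriodicMat A ↔
      ∃ M : Matrix (Fin d) (Fin e) PeriodicAnalytic, ∀ x, A x = evalMatrix x M := by
  constructor
  · rintro ⟨h_per, h_an⟩
    exact ⟨.of fun i j => ⟨fun x => A x i j, fun x => congrFun₂ (h_per x) i j, fun x => h_an x i j⟩,
      fun _ => rfl⟩
  · rintro ⟨M, hM⟩
    obtain rfl : A = fun x => evalMatrix x M := funext hM
    exact ⟨fun x => Matrix.ext fun i j => (M i j).periodic x, fun x i j => (M i j).analyticAt x⟩

variable [Fintype m] [Fintype n] [DecidableEq n]

lemma exists_forall_norm_evalMatrix_le (M : Matrix m n PeriodicAnalytic) :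
    ∃ K, ∀ x, ‖evalMatrix x M‖ ≤ K := by
  have h_cont : Continuous fun x => evalMatrix x M :=
    continuous_matrix fun i j => (M i j).continuous
  have h_per : Function.Periodic (fun x => evalMatrix x M) 1 :=
    fun x => Matrix.ext fun i j => (M i j).periodic x
  obtain ⟨K, hK⟩ := isBounded_iff_forall_norm_le.1
    (h_per.isBounded_of_continuous one_ne_zero h_cont)
  exact ⟨K, fun x => hK _ ⟨x, rfl⟩⟩

end Matrix

end PeriodicAnalytic

section TwistedConj

open Matrix

variable {R : Type*} [CommRing R]

section Kernel

variable [IsDomain R] [IsPrincipalIdealRing R]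

lemma exists_basis_mem_ker {ι M M' : Type*} [Finite ι] [AddCommGroup M] [Module R M]
    [AddCommGroup M'] [Module R M'] [Module.IsTorsionFree R M'] (b : Module.Basis ι R M)
    {f : M →ₗ[R] M'} (hf : f.ker ≠ ⊥) : ∃ (b' : Module.Basis ι R M) (i : ι), f (b' i) = 0 := by
  obtain ⟨k, S⟩ := Submodule.smithNormalForm b f.ker
  have : Nonempty (Fin k) := by
    by_contra h_empty
    rw [not_nonempty_iff] at h_empty
    have h_ker : Subsingleton f.ker := S.bN.repr.toEquiv.subsingleton
    exact hf (Submodule.subsingleton_iff_eq_bot.1 h_ker)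
  obtain ⟨i⟩ := this
  have ha : S.a i ≠ 0 := fun h => S.bN.ne_zero i <| Subtype.ext <| by
    rw [S.snf, h, zero_smul, ZeroMemClass.coe_zero]
  have h_smul : S.a i • f (S.bM (S.f i)) = 0 := by
    rw [← map_smul, ← S.snf]
    exact (S.bN i).2
  exact ⟨S.bM, S.f i, (smul_eq_zero.1 h_smul).resolve_left ha⟩

lemma exists_GL_mul_col_eq_zero {n : Type*} [Fintype n] [DecidableEq n] {M : Matrix n n R}
    (hM : M.det = 0) (j : n) : ∃ U : GL n R, ∀ i, (M * U.val) i j = 0 := by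
  obtain ⟨v, hv, hMv⟩ := exists_mulVec_eq_zero_iff.2 hM
  let e := Pi.basisFun R n
  obtain ⟨b, j', hj'⟩ := exists_basis_mem_ker e (f := M.mulVecLin)
    (Submodule.ne_bot_iff _ |>.2 ⟨v, hMv, hv⟩)
  let b' := b.reindex (Equiv.swap j' j)
  have hb' : M *ᵥ b' j = 0 := by simpa [b'] using hj'
  refine ⟨⟨e.toMatrix b', b'.toMatrix e, e.toMatrix_mul_toMatrix_flip b',
    b'.toMatrix_mul_toMatrix_flip e⟩, fun i => ?_⟩
  refine Eq.trans ?_ (congrFun hb' i)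
  simp only [e, mul_apply, mulVec, dotProduct, Module.Basis.toMatrix_apply, Pi.basisFun_repr]

end Kernel

section ConsOne

variable {d : ℕ}

/-- The embedding `X ↦ 1 ⊕ X` of `d × d` matrices into `(d + 1) × (d + 1)` matrices. -/
def consOneHom : Matrix (Fin d) (Fin d) R →* Matrix (Fin (d + 1)) (Fin (d + 1)) R where
  toFun X := .of (Fin.cons (Fin.cons 1 0) fun i => Fin.cons 0 (X i))
  map_one' := by
    ext i j
    cases i using Fin.cases <;> cases j using Fin.cases <;>
      simp [one_apply, Fin.succ_ne_zero, (Fin.succ_ne_zero _).symm]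
  map_mul' X Y := by
    ext i j
    cases i using Fin.cases <;> cases j using Fin.cases <;>
      simp [mul_apply, Fin.sum_univ_succ]

variable (X : Matrix (Fin d) (Fin d) R)

lemma consOneHom_zero_zero : consOneHom X 0 0 = 1 := rfl

lemma consOneHom_zero_succ (j : Fin d) : consOneHom X 0 j.succ = 0 := rfl

lemma consOneHom_succ_zero (i : Fin d) : consOneHom X i.succ 0 = 0 := rfl

lemma consOneHom_succ_succ (i j : Fin d) : consOneHom X i.succ j.succ = X i j := rfl

lemma mul_consOneHom_zero (N : Matrix (Fin (d + 1)) (Fin (d + 1)) R) (i : Fin (d + 1)) :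
    (N * consOneHom X) i 0 = N i 0 := by
  simp [mul_apply, Fin.sum_univ_succ, consOneHom_zero_zero, consOneHom_succ_zero]

lemma submatrix_succ_mul_consOneHom (N : Matrix (Fin (d + 1)) (Fin (d + 1)) R) :
    (N * consOneHom X).submatrix Fin.succ Fin.succ = N.submatrix Fin.succ Fin.succ * X := by
  ext i j
  simp [mul_apply, Fin.sum_univ_succ, consOneHom_zero_succ, consOneHom_succ_succ]

lemma submatrix_succ_consOneHom_mul (N : Matrix (Fin (d + 1)) (Fin (d + 1)) R) :
    (consOneHom X * N).submatrix Fin.succ Fin.succ = X * N.submatrix Fin.succ Fin.succ := by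
  ext i j
  simp [mul_apply, Fin.sum_univ_succ, consOneHom_succ_zero, consOneHom_succ_succ]

lemma map_consOneHom {S : Type*} [CommRing S] (τ : R →+* S) :
    (consOneHom X).map τ = consOneHom (X.map τ) := by
  ext i j
  cases i using Fin.cases <;> cases j using Fin.cases <;>
    simp [consOneHom_zero_zero, consOneHom_zero_succ, consOneHom_succ_zero, consOneHom_succ_succ]

end ConsOne

section

variable {n : Type*} [Fintype n] [DecidableEq n] (τ : R →+* R)

/-- The conjugate of `M` by `U` twisted by the endomorphism `τ`. When `τ` is the translation by `α`
this is the change of coordinates `U` in the cocycle `(α, M)`. -/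
def twistedConj (U : GL n R) (M : Matrix n n R) : Matrix n n R :=
  (U⁻¹).val.map τ * M * U.val

lemma twistedConj_one (M : Matrix n n R) : twistedConj τ 1 M = M := by
  simp [twistedConj]

lemma twistedConj_mul (U V : GL n R) (M : Matrix n n R) :
    twistedConj τ (U * V) M = twistedConj τ V (twistedConj τ U M) := by
  simp only [twistedConj, _root_.mul_inv_rev, Units.val_mul, Matrix.map_mul, Matrix.mul_assoc]

lemma twistedConj_add_smul {S : Type*} [CommSemiring S] [Algebra S R] (U : GL n R) (c : S)
    (M N : Matrix n n R) :
    twistedConj τ U (M + c • N) = twistedConj τ U M + c • twistedConj τ U N := by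
  simp only [twistedConj, Matrix.mul_add, Matrix.add_mul, Matrix.mul_smul, Matrix.smul_mul]

lemma twistedConj_surjective (U : GL n R) : Function.Surjective (twistedConj τ U) := by
  refine fun N => ⟨U.val.map τ * N * (U⁻¹).val, ?_⟩
  have h_map : (U⁻¹).val.map τ * U.val.map τ = 1 := by
    rw [← Matrix.map_mul, Units.inv_mul, Matrix.map_one _ (map_zero τ) (map_one τ)]
  rw [twistedConj, ← Matrix.mul_assoc, ← Matrix.mul_assoc, h_map, Matrix.one_mul,
    Units.inv_mul_cancel_right]

end

variable {d : ℕ} (τ : R →+* R)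

lemma twistedConj_consOneHom_zero {N : Matrix (Fin (d + 1)) (Fin (d + 1)) R}
    (hN : ∀ i, N i 0 = 0) (V : GL (Fin d) R) (i : Fin (d + 1)) :
    twistedConj τ (Units.map consOneHom V) N i 0 = 0 := by
  rw [twistedConj, Units.coe_map, mul_consOneHom_zero, mul_apply]
  simp only [hN, mul_zero, Finset.sum_const_zero]

lemma submatrix_succ_twistedConj_consOneHom (N : Matrix (Fin (d + 1)) (Fin (d + 1)) R)
    (V : GL (Fin d) R) :
    (twistedConj τ (Units.map consOneHom V) N).submatrix Fin.succ Fin.succ =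
      twistedConj τ V (N.submatrix Fin.succ Fin.succ) := by
  simp only [twistedConj, ← map_inv, Units.coe_map, map_consOneHom,
    submatrix_succ_mul_consOneHom, submatrix_succ_consOneHom_mul]

lemma det_toSquareBlockProp_of_forall {n : Type*} [Fintype n] [DecidableEq n] {p : n → Prop}
    [DecidablePred p] (hp : ∀ i, p i) (M : Matrix n n R) : (M.toSquareBlockProp p).det = M.det :=
  det_submatrix_equiv_self (Equiv.subtypeUnivEquiv hp) M

lemma det_toSquareBlockProp_succ (N : Matrix (Fin (d + 1)) (Fin (d + 1)) R) (m : ℕ) :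
    (N.toSquareBlockProp (m + 1 ≤ ·.val)).det =
      ((N.submatrix Fin.succ Fin.succ).toSquareBlockProp (m ≤ ·.val)).det := by
  let e : {i : Fin d // m ≤ i.val} → {i : Fin (d + 1) // m + 1 ≤ i.val} :=
    fun i => ⟨i.1.succ, Nat.succ_le_succ i.2⟩
  have he : Function.Bijective e := by
    refine ⟨fun i j hij => Subtype.ext (Fin.succ_injective _ (congrArg Subtype.val hij)), ?_⟩
    rintro ⟨i, hi⟩
    cases i using Fin.cases with
    | zero => exact absurd hi (Nat.not_succ_le_zero m)
    | succ i => exact ⟨⟨i, Nat.le_of_succ_le_succ hi⟩, rfl⟩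
  exact (det_submatrix_equiv_self (.ofBijective e he) _).symm

theorem exists_twistedConj_blockTriangular [IsDomain R] [IsPrincipalIdealRing R]
    (M : Matrix (Fin d) (Fin d) R) :
    ∃ (U : GL (Fin d) R) (m : ℕ),
      (∀ i j : Fin d, j.val < m → j ≤ i → twistedConj τ U M i j = 0) ∧
        ((twistedConj τ U M).toSquareBlockProp (m ≤ ·.val)).det ≠ 0 := by
  induction d with
  | zero => exact ⟨1, 0, fun i => i.elim0, by simp⟩
  | succ d ih =>
    rcases ne_or_eq M.det 0 with hM | hM
    · exact ⟨1, 0, fun i j hj => absurd hj (Nat.not_lt_zero _),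
        by rwa [twistedConj_one, det_toSquareBlockProp_of_forall fun _ => Nat.zero_le _]⟩
    obtain ⟨U, hU⟩ := exists_GL_mul_col_eq_zero hM 0
    have hN (i : Fin (d + 1)) : twistedConj τ U M i 0 = 0 := by
      rw [twistedConj, Matrix.mul_assoc, mul_apply]
      simp only [hU, mul_zero, Finset.sum_const_zero]
    obtain ⟨V, m, hV_zero, hV_det⟩ := ih ((twistedConj τ U M).submatrix Fin.succ Fin.succ)
    rw [← submatrix_succ_twistedConj_consOneHom] at hV_zero hV_det
    refine ⟨U * Units.map consOneHom V, m + 1, fun i j hj hji => ?_, ?_⟩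
    · rw [twistedConj_mul]
      cases j using Fin.cases with
      | zero => exact twistedConj_consOneHom_zero τ hN V i
      | succ j =>
        obtain ⟨i, rfl⟩ := Fin.exists_succ_eq.2 ((Fin.succ_pos j).trans_le hji).ne'
        exact hV_zero i j (Nat.lt_of_succ_lt_succ hj) (Fin.succ_le_succ_iff.1 hji)
    · rwa [twistedConj_mul, det_toSquareBlockProp_succ]

end TwistedConj

section ElogIntegral

variable {X : Type*} [MeasurableSpace X] {μ : Measure X}

lemma elogIntegral_mono_ae {g h : X → ℝ} (hg : ∀ᵐ x ∂μ, 0 ≤ g x) (hgh : ∀ᵐ x ∂μ, g x ≤ h x) :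
    elogIntegral μ g ≤ elogIntegral μ h := by
  unfold elogIntegral
  by_cases hc : μ {x | g x = 0} = 0 ∧ (∫⁻ x, ENNReal.ofReal (-Real.log (g x)) ∂μ) ≠ ⊤
  · have hg_pos : ∀ᵐ x ∂μ, 0 < g x := by
      filter_upwards [hg, measure_eq_zero_iff_ae_notMem.1 hc.1] with x hx hx' using hx.lt_of_ne' hx'
    have h_log : ∀ᵐ x ∂μ, Real.log (g x) ≤ Real.log (h x) := by
      filter_upwards [hg_pos, hgh] with x hx hx' using Real.log_le_log hx hx'
    have h_neg : (∫⁻ x, ENNReal.ofReal (-Real.log (h x)) ∂μ) ≤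
        ∫⁻ x, ENNReal.ofReal (-Real.log (g x)) ∂μ :=
      lintegral_mono_ae (h_log.mono fun x hx => ENNReal.ofReal_le_ofReal (neg_le_neg hx))
    have h_pos : (∫⁻ x, ENNReal.ofReal (Real.log (g x)) ∂μ) ≤
        ∫⁻ x, ENNReal.ofReal (Real.log (h x)) ∂μ :=
      lintegral_mono_ae (h_log.mono fun x hx => ENNReal.ofReal_le_ofReal hx)
    have hh_ne : μ {x | h x = 0} = 0 := by
      refine measure_eq_zero_iff_ae_notMem.2 ?_
      filter_upwards [hg_pos, hgh] with x hx hx' using (hx.trans_le hx').ne'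
    rw [if_pos hc, if_pos ⟨hh_ne, ne_top_of_le_ne_top hc.2 h_neg⟩]
    exact EReal.sub_le_sub (by exact_mod_cast h_pos) (by exact_mod_cast h_neg)
  · rw [if_neg hc]
    exact bot_le

lemma elogIntegral_exp {φ : X → ℝ} (hφ : Integrable φ μ) :
    elogIntegral μ (fun x => Real.exp (φ x)) = (∫ x, φ x ∂μ : ℝ) := by
  have h_neg : ∫⁻ x, ENNReal.ofReal (-φ x) ∂μ ≠ ⊤ := hφ.neg.lintegral_lt_top.ne
  simp only [elogIntegral, Real.exp_ne_zero, Set.ofPred_false, measure_empty, Real.log_exp,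
    true_and]
  rw [if_pos h_neg, integral_eq_lintegral_pos_part_sub_lintegral_neg_part hφ, EReal.coe_sub,
    EReal.coe_ennreal_toReal hφ.lintegral_lt_top.ne, EReal.coe_ennreal_toReal h_neg]

end ElogIntegral

section InvMul

lemma tendsto_inv_mul_add_mul (C a : ℝ) :
    Tendsto (fun n : ℕ => (((n : ℝ)⁻¹ : ℝ) : EReal) * ((C + n * a : ℝ) : EReal)) atTop
      (𝓝 (a : EReal)) := by
  have h_real : Tendsto (fun n : ℕ => (n : ℝ)⁻¹ * C + a) atTop (𝓝 (0 * C + a)) :=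
    (tendsto_inv_atTop_nhds_zero_nat.mul_const C).add_const a
  rw [zero_mul, zero_add] at h_real
  refine ((continuous_coe_real_ereal.tendsto a).comp h_real).congr' ?_
  filter_upwards [eventually_ne_atTop 0] with n hn
  rw [Function.comp_apply, ← EReal.coe_mul, mul_add,
    inv_mul_cancel_left₀ (Nat.cast_ne_zero.2 hn)]

lemma inv_mul_le_inv_mul {x y : EReal} (h : x ≤ y) (n : ℕ) :
    (((n : ℝ)⁻¹ : ℝ) : EReal) * x ≤ (((n : ℝ)⁻¹ : ℝ) : EReal) * y :=
  mul_le_mul_of_nonneg_left h (EReal.coe_nonneg.2 (by positivity))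

lemma le_of_tendsto_inv_mul {F : ℕ → EReal} {L : EReal} {C a : ℝ}
    (hF : ∀ n : ℕ, ((C + n * a : ℝ) : EReal) ≤ F n)
    (hL : Tendsto (fun n : ℕ => (((n : ℝ)⁻¹ : ℝ) : EReal) * F n) atTop (𝓝 L)) : (a : EReal) ≤ L :=
  le_of_tendsto_of_tendsto' (tendsto_inv_mul_add_mul C a) hL fun n => inv_mul_le_inv_mul (hF n) n

lemma tendsto_inv_mul_of_forall_lt {F : ℕ → EReal} {l : ℝ}
    (h_upper : ∀ b > l, ∃ C : ℝ, ∀ n : ℕ, F n ≤ ((C + n * b : ℝ) : EReal))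
    (h_lower : ∀ a < l, ∃ C : ℝ, ∀ n : ℕ, ((C + n * a : ℝ) : EReal) ≤ F n) :
    Tendsto (fun n : ℕ => (((n : ℝ)⁻¹ : ℝ) : EReal) * F n) atTop (𝓝 (l : EReal)) := by
  refine tendsto_order.2 ⟨fun a ha => ?_, fun b hb => ?_⟩
  · obtain ⟨a', ha', ha'l⟩ := EReal.lt_iff_exists_real_btwn.1 ha
    obtain ⟨C, hC⟩ := h_lower a' (EReal.coe_lt_coe_iff.1 ha'l)
    filter_upwards [(tendsto_inv_mul_add_mul C a').eventually_const_lt ha'] with n hn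
    exact hn.trans_le (inv_mul_le_inv_mul (hC n) n)
  · obtain ⟨b', hlb', hb'⟩ := EReal.lt_iff_exists_real_btwn.1 hb
    obtain ⟨C, hC⟩ := h_upper b' (EReal.coe_lt_coe_iff.1 hlb')
    filter_upwards [(tendsto_inv_mul_add_mul C b').eventually_lt_const hb'] with n hn
    exact (inv_mul_le_inv_mul (hC n) n).trans_lt hn

end InvMul

section SingularValues

open Matrix

variable {d k : ℕ} {M : Matrix (Fin d) (Fin d) ℂ}

lemma norm_toEuclideanLin_le {m n : Type*} [Fintype m] [Fintype n] [DecidableEq n]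
    (M : Matrix m n ℂ) (v : EuclideanSpace ℂ n) : ‖toEuclideanLin M v‖ ≤ ‖M‖ * ‖v‖ :=
  M.l2_opNorm_mulVec v

lemma exists_mem_ne_zero_of_finrank_pos {V : Submodule ℂ (EuclideanSpace ℂ (Fin d))}
    (hV : 0 < Module.finrank ℂ V) : ∃ v ∈ V, v ≠ 0 :=
  V.exists_mem_ne_zero_of_ne_bot (by rintro rfl; exact hV.ne' (finrank_bot ℂ _))

lemma le_singVal {V : Submodule ℂ (EuclideanSpace ℂ (Fin d))} (hV : 0 < Module.finrank ℂ V) {t : ℝ}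
    (ht : ∀ v ∈ V, t * ‖v‖ ≤ ‖toEuclideanLin M v‖) : t ≤ singVal (Module.finrank ℂ V) M := by
  refine le_csSup ⟨‖M‖, ?_⟩ ⟨V, rfl, ht⟩
  rintro s ⟨W, hW, hs⟩
  obtain ⟨w, hw, hw0⟩ := exists_mem_ne_zero_of_finrank_pos (hW ▸ hV)
  exact le_of_mul_le_mul_right ((hs w hw).trans (norm_toEuclideanLin_le M w)) (norm_pos_iff.2 hw0)

lemma singVal_nonneg (k : ℕ) (M : Matrix (Fin d) (Fin d) ℂ) : 0 ≤ singVal k M := by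
  by_cases hk : ∃ V : Submodule ℂ (EuclideanSpace ℂ (Fin d)), Module.finrank ℂ V = k
  · obtain ⟨V, hV⟩ := hk
    exact Real.sSup_nonneg' ⟨0, ⟨V, hV, fun v _ => by rw [zero_mul]; exact norm_nonneg _⟩, le_rfl⟩
  · refine Real.sSup_nonneg ?_
    rintro t ⟨V, hV, -⟩
    exact absurd ⟨V, hV⟩ hk

lemma singVal_le_singVal_one (hk : 0 < k) (M : Matrix (Fin d) (Fin d) ℂ) :
    singVal k M ≤ singVal 1 M := by
  refine Real.sSup_le ?_ (singVal_nonneg 1 M)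
  rintro t ⟨V, rfl, ht⟩
  obtain ⟨v, hv, hv0⟩ := exists_mem_ne_zero_of_finrank_pos hk
  have h_span : Module.finrank ℂ (Submodule.span ℂ {v}) = 1 := finrank_span_singleton hv0
  rw [← h_span]
  exact le_singVal (h_span ▸ one_pos)
    fun w hw => ht w ((Submodule.span_singleton_le_iff_mem v V).2 hv hw)

lemma norm_apply_le_singVal_one (M : Matrix (Fin d) (Fin d) ℂ) (i j : Fin d) :
    ‖M i j‖ ≤ singVal 1 M := by
  have h_span : Module.finrank ℂ (Submodule.span ℂ {EuclideanSpace.single j (1 : ℂ)}) = 1 :=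
    finrank_span_singleton (by simp)
  rw [← h_span]
  refine le_singVal (h_span ▸ one_pos) fun v hv => ?_
  obtain ⟨c, rfl⟩ := Submodule.mem_span_singleton.1 hv
  have h_entry : toEuclideanLin M (EuclideanSpace.single j 1) i = M i j := by
    simp [toLpLin_apply]
  rw [map_smul, norm_smul, norm_smul, PiLp.norm_single, norm_one, mul_one, mul_comm,
    ← h_entry]
  exact mul_le_mul_of_nonneg_left (PiLp.norm_apply_le _ i) (norm_nonneg c)

-- A `(k + 1)`-dimensional subspace meets the kernel of `R` nontrivially.
lemma singVal_succ_le_norm_sub {R : Matrix (Fin d) (Fin d) ℂ} (hR : R.rank ≤ k)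
    (M : Matrix (Fin d) (Fin d) ℂ) : singVal (k + 1) M ≤ ‖M - R‖ := by
  refine Real.sSup_le ?_ (norm_nonneg _)
  rintro t ⟨V, hV, ht⟩
  obtain ⟨v, hv, hv0⟩ : ∃ v : V, toEuclideanLin R v = 0 ∧ v ≠ 0 := by
    refine (Submodule.ne_bot_iff _).1
      (LinearMap.ker_ne_bot_of_finrank_lt (f := (toEuclideanLin R).rangeRestrict.domRestrict V) ?_)
      |>.imp fun v => And.imp_left fun h => congrArg Subtype.val h
    rw [hV, Nat.lt_succ_iff]
    exact hR.trans' (R.rank_eq_finrank_range_toLin (PiLp.basisFun 2 ℂ _) (PiLp.basisFun 2 ℂ _)).ge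
  have h_sub : toEuclideanLin M v = toEuclideanLin (M - R) v := by
    rw [map_sub, LinearMap.sub_apply, hv, sub_zero]
  refine le_of_mul_le_mul_right ((ht v v.2).trans ?_) (norm_pos_iff.2 (v.coe_ne_coe.2 hv0))
  exact h_sub ▸ norm_toEuclideanLin_le (M - R) v

lemma singVal_mul_mul_le (hk : 0 < k) {X : Matrix (Fin d) (Fin d) ℂ} {Y : GL (Fin d) ℂ} {K : ℝ}
    (hK : 0 < K) (hX : ‖X‖ ≤ K) (hY : ‖Y.val‖ ≤ K) (M : Matrix (Fin d) (Fin d) ℂ) :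
    singVal k (X * M * Y.val) ≤ K * K * singVal k M := by
  refine Real.sSup_le ?_ (mul_nonneg (mul_pos hK hK).le (singVal_nonneg k M))
  rintro t ⟨V, rfl, ht⟩
  rcases le_total t 0 with ht0 | ht0
  · exact ht0.trans (mul_nonneg (mul_pos hK hK).le (singVal_nonneg _ M))
  have hY_inj : Function.Injective (toEuclideanLin Y.val) := by
    refine Function.LeftInverse.injective (g := toEuclideanLin (Y⁻¹).val) fun v => ?_
    rw [← LinearMap.comp_apply, ← toLpLin_mul_same, Units.inv_mul, toLpLin_one, LinearMap.id_apply]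
  have h_map : Module.finrank ℂ (V.map (toEuclideanLin Y.val)) = Module.finrank ℂ V :=
    (V.equivMapOfInjective _ hY_inj).finrank_eq.symm
  rw [← div_le_iff₀' (mul_pos hK hK), ← h_map]
  refine le_singVal (h_map ▸ hk) ?_
  rintro _ ⟨v, hv, rfl⟩
  refine le_of_mul_le_mul_left ?_ hK
  calc K * (t / (K * K) * ‖toEuclideanLin Y.val v‖)
      ≤ K * (t / (K * K) * (K * ‖v‖)) := by
        have := (norm_toEuclideanLin_le Y.val v).trans
          (mul_le_mul_of_nonneg_right hY (norm_nonneg v))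
        gcongr
    _ = t * ‖v‖ := by field_simp
    _ ≤ ‖toEuclideanLin (X * M * Y.val) v‖ := ht v hv
    _ = ‖toEuclideanLin X (toEuclideanLin M (toEuclideanLin Y.val v))‖ := by
        simp only [toLpLin_mul_same, LinearMap.comp_apply]
    _ ≤ K * ‖toEuclideanLin M (toEuclideanLin Y.val v)‖ :=
        (norm_toEuclideanLin_le X _).trans (mul_le_mul_of_nonneg_right hX (norm_nonneg _))

lemma norm_det_toSquareBlockProp_le (p : Fin d → Prop) [DecidablePred p]
    (M : Matrix (Fin d) (Fin d) ℂ) :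
    ‖(M.toSquareBlockProp p).det‖ ≤
      (Fintype.card {i // p i}).factorial * singVal 1 M ^ Fintype.card {i // p i} := by
  rw [← nsmul_eq_mul]
  exact det_le (abv := NormedField.toAbsoluteValue ℂ) fun i j => norm_apply_le_singVal_one M i j

end SingularValues

section BoundedConjugacy

open Matrix

variable {d k : ℕ} {α : ℝ} {A B : ℝ → Matrix (Fin d) (Fin d) ℂ}

/-- The cocycles `(α, A)` and `(α, B)` are conjugate by a map `P : ℝ → GL(d, ℂ)` that is bounded
together with its inverse. No regularity is required of `P`; bounded conjugacy is what preserves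
the Lyapunov exponents. -/
def IsBoundedConj (α : ℝ) (A B : ℝ → Matrix (Fin d) (Fin d) ℂ) : Prop :=
  ∃ P : ℝ → GL (Fin d) ℂ, (∃ K, ∀ x, ‖(P x).val‖ ≤ K ∧ ‖(P x)⁻¹.val‖ ≤ K) ∧
    ∀ x, A x * (P x).val = (P (x + α)).val * B x

lemma matIter_mul_of_forall {P : ℝ → Matrix (Fin d) (Fin d) ℂ}
    (hP : ∀ x, A x * P x = P (x + α) * B x) (n : ℕ) (x : ℝ) :
    matIter α A n x * P x = P (x + n * α) * matIter α B n x := by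
  induction n generalizing x with
  | zero => simp [matIter]
  | succ n ih =>
    have h_shift : x + α + n * α = x + (n + 1 : ℕ) * α := by push_cast; ring
    rw [matIter, matIter, Matrix.mul_assoc, hP, ← Matrix.mul_assoc, ih, Matrix.mul_assoc, h_shift]

namespace IsBoundedConj

lemma symm (h : IsBoundedConj α A B) : IsBoundedConj α B A := by
  obtain ⟨P, ⟨K, hK⟩, hP⟩ := h
  refine ⟨fun x => (P x)⁻¹, ⟨K, fun x => ⟨(hK x).2, by simpa using (hK x).1⟩⟩, fun x => ?_⟩
  rw [Units.mul_inv_eq_iff_eq_mul, Matrix.mul_assoc, hP, Units.inv_mul_cancel_left]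

lemma exists_singVal_le (h : IsBoundedConj α A B) (hk : 0 < k) :
    ∃ C : ℝ, ∀ n x, singVal k (matIter α A n x) ≤ Real.exp C * singVal k (matIter α B n x) := by
  obtain ⟨P, ⟨K, hK⟩, hP⟩ := h
  have hK' : 0 < max K 1 := lt_max_of_lt_right one_pos
  refine ⟨Real.log (max K 1 * max K 1), fun n x => ?_⟩
  rw [Real.exp_log (mul_pos hK' hK'),
    (Units.eq_mul_inv_iff_mul_eq (P x)).2 (matIter_mul_of_forall hP n x)]
  exact singVal_mul_mul_le hk hK' ((hK _).1.trans (le_max_left K 1))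
    ((hK _).2.trans (le_max_left K 1)) _

end IsBoundedConj

lemma isBoundedConj_evalMatrix_twistedConj (α : ℝ) (U : GL (Fin d) PeriodicAnalytic)
    (M : Matrix (Fin d) (Fin d) PeriodicAnalytic) :
    IsBoundedConj α (fun x => PeriodicAnalytic.evalMatrix x M)
      (fun x => PeriodicAnalytic.evalMatrix x (twistedConj (PeriodicAnalytic.shift α) U M)) := by
  obtain ⟨K, hK⟩ := PeriodicAnalytic.exists_forall_norm_evalMatrix_le U.val
  obtain ⟨K', hK'⟩ := PeriodicAnalytic.exists_forall_norm_evalMatrix_le U⁻¹.val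
  refine ⟨fun x => GeneralLinearGroup.map (PeriodicAnalytic.eval x) U, ⟨max K K', fun x =>
    ⟨(hK x).trans (le_max_left K K'), ?_⟩⟩, fun x => ?_⟩
  · rw [← map_inv]
    exact (hK' x).trans (le_max_right K K')
  · have h_shift : (U⁻¹.val.map (PeriodicAnalytic.shift α)).map (PeriodicAnalytic.eval x) =
        (GeneralLinearGroup.map (PeriodicAnalytic.eval (x + α)) U)⁻¹.val := by
      rw [← map_inv]
      ext i j
      exact PeriodicAnalytic.eval_shift α x _
    simp only [PeriodicAnalytic.evalMatrix, twistedConj, Matrix.map_mul, h_shift, Matrix.mul_assoc,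
      Units.mul_inv_cancel_left]
    rfl

end BoundedConjugacy

section BlockDeterminant

open Matrix

section

variable {n R : Type*} [Fintype n] [CommRing R] {p : n → Prop} {M N : Matrix n n R}

lemma toSquareBlockProp_mul [DecidablePred p] (hM : M.toBlock p (¬p ·) = 0) :
    (M * N).toSquareBlockProp p = M.toSquareBlockProp p * N.toSquareBlockProp p := by
  refine (toBlock_mul_eq_add p p p M N).trans ?_
  rw [hM, Matrix.zero_mul, add_zero]
  rfl

lemma toBlock_mul_eq_zero (hM : M.toBlock p (¬p ·) = 0) (hN : N.toBlock p (¬p ·) = 0) :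
    (M * N).toBlock p (¬p ·) = 0 := by
  classical
  rw [toBlock_mul_eq_add p p (¬p ·) M N, hM, hN, Matrix.zero_mul, Matrix.mul_zero, add_zero]

end

variable {d : ℕ} {p : Fin d → Prop} [DecidablePred p]

lemma det_toSquareBlockProp_matIter {α : ℝ} {B : ℝ → Matrix (Fin d) (Fin d) ℂ}
    (hB : ∀ x, (B x).toBlock p (¬p ·) = 0) (n : ℕ) (x : ℝ) :
    ((matIter α B n x).toSquareBlockProp p).det =
      ∏ i ∈ Finset.range n, ((B (x + i * α)).toSquareBlockProp p).det := by
  have h_zero (n : ℕ) (x : ℝ) : (matIter α B n x).toBlock p (¬p ·) = 0 := by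
    induction n generalizing x with
    | zero => exact toBlock_one_disjoint disjoint_compl_right
    | succ n ih => exact toBlock_mul_eq_zero (ih (x + α)) (hB x)
  induction n generalizing x with
  | zero => exact (congrArg det (toBlock_one_self p)).trans (by simp)
  | succ n ih =>
    rw [matIter, toSquareBlockProp_mul (h_zero n _), det_mul, ih, Finset.prod_range_succ']
    have h_shift (i : ℕ) : x + α + i * α = x + (i + 1 : ℕ) * α := by push_cast; ring
    simp only [h_shift, Nat.cast_zero, zero_mul, add_zero]

end BlockDeterminant

section LogIntegralBound

open Matrix PeriodicAnalytic

variable {d : ℕ} {p : Fin d → Prop} [DecidablePred p] {α : ℝ}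
  {T : Matrix (Fin d) (Fin d) PeriodicAnalytic}

lemma exists_exp_le_singVal_one (hp : ∃ i, p i) (hT : T.toBlock p (¬p ·) = 0) :
    ∃ C s : ℝ, ∀ (n : ℕ) (x : ℝ),
      (∀ i < n, (T.toSquareBlockProp p).det (x + i * α) ≠ 0) →
      Real.exp (C + s * ∑ i ∈ Finset.range n, Real.log ‖(T.toSquareBlockProp p).det (x + i * α)‖) ≤
        singVal 1 (matIter α (fun x => evalMatrix x T) n x) := by
  set g := (T.toSquareBlockProp p).det
  set s := Fintype.card {i // p i}
  have hs : s ≠ 0 := (Fintype.card_pos_iff.2 (nonempty_subtype.2 hp)).ne'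
  refine ⟨-((s : ℝ)⁻¹ * Real.log s.factorial), (s : ℝ)⁻¹, fun n x hx => ?_⟩
  have h_block (x : ℝ) : ((evalMatrix x T).toSquareBlockProp p).det = g x :=
    ((eval x).map_det _).symm
  have h_det : ∏ i ∈ Finset.range n, ‖g (x + i * α)‖ ≤
      s.factorial * singVal 1 (matIter α (fun x => evalMatrix x T) n x) ^ s := by
    refine le_trans (le_of_eq ?_) (norm_det_toSquareBlockProp_le p _)
    rw [det_toSquareBlockProp_matIter, norm_prod]
    · simp only [h_block]
    · intro x
      exact congrArg (Matrix.map · (eval x)) hT |>.trans (Matrix.map_zero _ (map_zero _))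
  refine le_of_pow_le_pow_left₀ hs (singVal_nonneg 1 _) ?_
  rw [← Real.exp_nat_mul, mul_add, mul_neg, mul_inv_cancel_left₀, mul_inv_cancel_left₀,
    Real.exp_add, Real.exp_neg, Real.exp_log, Real.exp_sum, inv_mul_le_iff₀]
  · refine le_of_eq_of_le (Finset.prod_congr rfl fun i hi => ?_) h_det
    exact Real.exp_log (norm_pos_iff.2 (hx i (Finset.mem_range.1 hi)))
  all_goals positivity

theorem ne_bot_of_hasLyapunovExp_one (hp : ∃ i, p i) (hT : T.toBlock p (¬p ·) = 0)
    (hT_det : (T.toSquareBlockProp p).det ≠ 0) {A : ℝ → Matrix (Fin d) (Fin d) ℂ}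
    (hA : IsBoundedConj α A fun x => evalMatrix x T) {L : EReal}
    (hL : HasLyapunovExp α A 1 L) : L ≠ ⊥ := by
  set g := (T.toSquareBlockProp p).det
  obtain ⟨C, s, hC⟩ := exists_exp_le_singVal_one (α := α) hp hT
  obtain ⟨C', hC'⟩ := hA.symm.exists_singVal_le one_pos
  let φ (n : ℕ) (x : ℝ) : ℝ := (C - C') + s * ∑ i ∈ Finset.range n, Real.log ‖g (x + i * α)‖
  have h_sum (n : ℕ) := (integrableOn_sum_log_norm g α n).const_mul s
  have hφ_int (n : ℕ) : Integrable (φ n) (volume.restrict (Set.Ioc 0 1)) :=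
    (integrable_const _).add (h_sum n)
  let a : ℝ := s * ∫ x in Set.Ioc (0 : ℝ) 1, Real.log ‖g x‖
  have hφ_eq (n : ℕ) : ∫ x in Set.Ioc (0 : ℝ) 1, φ n x = (C - C') + n * a := by
    rw [integral_add (integrable_const _) (h_sum n), integral_const_mul, integral_sum_log_norm,
      mul_left_comm]
    simp [a]
  have h_exp (n : ℕ) : ∀ᵐ x ∂volume.restrict (Set.Ioc (0 : ℝ) 1),
      Real.exp (φ n x) ≤ singVal 1 (matIter α A n x) := by
    have h_ne : ∀ᵐ x, ∀ i : ℕ, g (x + i * α) ≠ 0 :=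
      ae_all_iff.2 fun i => ae_ne_zero (shift_ne_zero hT_det (i * α))
    filter_upwards [ae_restrict_of_ae h_ne] with x hx
    change Real.exp (C - C' + s * _) ≤ _
    rw [sub_add_eq_add_sub, Real.exp_sub, div_le_iff₀' (Real.exp_pos C')]
    exact (hC n x fun i _ => hx i).trans (hC' n x)
  refine ne_bot_of_le_ne_bot (EReal.coe_ne_bot a)
    (le_of_tendsto_inv_mul (C := C - C') (fun n => ?_) hL)
  rw [← hφ_eq, ← elogIntegral_exp (hφ_int n)]
  exact elogIntegral_mono_ae (.of_forall fun _ => (Real.exp_pos _).le) (h_exp n)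

end LogIntegralBound

section UniformExponents

open Matrix

variable {d k : ℕ} {α l : ℝ} {A B : ℝ → Matrix (Fin d) (Fin d) ℂ}

/-- `σ_k(A_n(x)) = exp(n l + o(n))` uniformly in `x`: the `k`-th Lyapunov exponent of `(α, A)`
exists pointwise, with uniform convergence, and equals `l`. The constants `C` absorb the effect of
a bounded conjugacy. -/
structure HasUniformLyapunovExp (α : ℝ) (A : ℝ → Matrix (Fin d) (Fin d) ℂ) (k : ℕ) (l : ℝ) :
    Prop where
  upper : ∀ b > l, ∃ C : ℝ, ∀ (n : ℕ) (x : ℝ), singVal k (matIter α A n x) ≤ Real.exp (C + n * b)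
  lower : ∀ a < l, ∃ C : ℝ, ∀ (n : ℕ) (x : ℝ), Real.exp (C + n * a) ≤ singVal k (matIter α A n x)

theorem HasUniformLyapunovExp.hasLyapunovExp (h : HasUniformLyapunovExp α A k l) :
    HasLyapunovExp α A k l := by
  have h_const (c : ℝ) : elogIntegral (volume.restrict (Set.Ioc (0 : ℝ) 1))
      (fun _ => Real.exp c) = c := by
    rw [elogIntegral_exp (integrable_const c)]
    simp
  refine tendsto_inv_mul_of_forall_lt (fun b hb => ?_) fun a ha => ?_
  · obtain ⟨C, hC⟩ := h.upper b hb
    refine ⟨C, fun n => (elogIntegral_mono_ae ?_ ?_).trans_eq (h_const _)⟩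
    · exact .of_forall fun _ => singVal_nonneg k _
    · exact .of_forall (hC n)
  · obtain ⟨C, hC⟩ := h.lower a ha
    refine ⟨C, fun n => (h_const _).symm.trans_le (elogIntegral_mono_ae ?_ ?_)⟩
    · exact .of_forall fun _ => (Real.exp_pos _).le
    · exact .of_forall (hC n)

lemma IsBoundedConj.exists_singVal_le_exp (h : IsBoundedConj α A B) (hk : 0 < k) {b : ℝ}
    (hB : ∃ C : ℝ, ∀ (n : ℕ) (x : ℝ), singVal k (matIter α B n x) ≤ Real.exp (C + n * b)) :
    ∃ C : ℝ, ∀ (n : ℕ) (x : ℝ), singVal k (matIter α A n x) ≤ Real.exp (C + n * b) := by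
  obtain ⟨C, hC⟩ := h.exists_singVal_le hk
  obtain ⟨C', hC'⟩ := hB
  refine ⟨C + C', fun n x => (hC n x).trans ?_⟩
  rw [add_assoc, Real.exp_add C]
  exact mul_le_mul_of_nonneg_left (hC' n x) (Real.exp_pos C).le

lemma IsBoundedConj.exists_exp_le_singVal (h : IsBoundedConj α A B) (hk : 0 < k) {a : ℝ}
    (hB : ∃ C : ℝ, ∀ (n : ℕ) (x : ℝ), Real.exp (C + n * a) ≤ singVal k (matIter α B n x)) :
    ∃ C : ℝ, ∀ (n : ℕ) (x : ℝ), Real.exp (C + n * a) ≤ singVal k (matIter α A n x) := by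
  obtain ⟨C, hC⟩ := h.symm.exists_singVal_le hk
  obtain ⟨C', hC'⟩ := hB
  refine ⟨-C + C', fun n x => ?_⟩
  rw [add_assoc, Real.exp_add, Real.exp_neg, inv_mul_le_iff₀ (Real.exp_pos C)]
  exact (hC' n x).trans (hC n x)

theorem HasUniformLyapunovExp.of_isBoundedConj (h : HasUniformLyapunovExp α B k l) (hk : 0 < k)
    (hAB : IsBoundedConj α A B) : HasUniformLyapunovExp α A k l where
  upper b hb := hAB.exists_singVal_le_exp hk (h.upper b hb)
  lower a ha := hAB.exists_exp_le_singVal hk (h.lower a ha)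

end UniformExponents

section InvariantSubspaces

open Matrix

variable {d k : ℕ} {α c : ℝ} {B : ℝ → Matrix (Fin d) (Fin d) ℂ}

lemma pow_le_singVal_matIter {V : Submodule ℂ (EuclideanSpace ℂ (Fin d))}
    (hV : 0 < Module.finrank ℂ V) (h_inv : ∀ x, ∀ v ∈ V, toEuclideanLin (B x) v ∈ V) (hc : 0 ≤ c)
    (h_le : ∀ x, ∀ v ∈ V, c * ‖v‖ ≤ ‖toEuclideanLin (B x) v‖) (n : ℕ) (x : ℝ) :
    c ^ n ≤ singVal (Module.finrank ℂ V) (matIter α B n x) := by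
  refine le_singVal hV ?_
  induction n generalizing x with
  | zero => simp [matIter]
  | succ n ih =>
    intro v hv
    rw [matIter, toLpLin_mul_same, LinearMap.comp_apply, pow_succ, mul_assoc]
    exact (mul_le_mul_of_nonneg_left (h_le x v hv) (pow_nonneg hc n)).trans
      (ih (x + α) _ (h_inv x v hv))

lemma mul_matIter_eq_mul_mul {Q : Matrix (Fin d) (Fin d) ℂ} (hQ : IsIdempotentElem Q)
    (h_inv : ∀ x, Q * B x = Q * B x * Q) (n : ℕ) (x : ℝ) :
    Q * matIter α B n x = Q * matIter α B n x * Q := by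
  induction n generalizing x with
  | zero => simp only [matIter, mul_one, hQ.eq]
  | succ n ih =>
    calc Q * (matIter α B n (x + α) * B x) = Q * matIter α B n (x + α) * (Q * B x) := by
          rw [← mul_assoc, ih, mul_assoc _ Q, ← ih]
      _ = Q * (matIter α B n (x + α) * B x) * Q := by
          rw [h_inv, ← mul_assoc, ← mul_assoc _ Q, ← ih, mul_assoc Q]

lemma singVal_succ_matIter_le_pow {Q : Matrix (Fin d) (Fin d) ℂ} (hQ : IsIdempotentElem Q)
    (hQ_rank : (1 - Q).rank ≤ k) (hQ_norm : ‖Q‖ ≤ 1) (h_inv : ∀ x, Q * B x = Q * B x * Q)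
    (h_le : ∀ x, ‖Q * B x‖ ≤ c) (n : ℕ) (x : ℝ) :
    singVal (k + 1) (matIter α B n x) ≤ c ^ n := by
  suffices h : ‖Q * matIter α B n x‖ ≤ c ^ n by
    have h_rank : ((1 - Q) * matIter α B n x).rank ≤ k := (rank_mul_le_left _ _).trans hQ_rank
    refine (singVal_succ_le_norm_sub h_rank _).trans ?_
    rwa [sub_mul, one_mul, sub_sub_cancel]
  induction n generalizing x with
  | zero => simpa [matIter] using hQ_norm
  | succ n ih =>
    have h_succ : Q * matIter α B (n + 1) x = Q * matIter α B n (x + α) * (Q * B x) := by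
      rw [matIter, ← mul_assoc, ← mul_assoc _ Q, ← mul_matIter_eq_mul_mul hQ h_inv]
    rw [h_succ, pow_succ]
    exact (norm_mul_le _ _).trans
      (mul_le_mul (ih _) (h_le x) (norm_nonneg _) ((norm_nonneg _).trans (ih (x + α))))

end InvariantSubspaces

section Triangular

open Matrix

variable {d : ℕ} {α c η : ℝ}

lemma norm_le_sum_norm_single (M : Matrix (Fin d) (Fin d) ℂ) {r : ℝ} (hM : ∀ i j, ‖M i j‖ ≤ r) :
    ‖M‖ ≤ r * ∑ i, ∑ j, ‖(single i j 1 : Matrix (Fin d) (Fin d) ℂ)‖ := by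
  conv_lhs => rw [matrix_eq_sum_single M]
  simp only [Finset.mul_sum]
  refine norm_sum_le_of_le _ fun i _ => norm_sum_le_of_le _ fun j _ => ?_
  rw [← mul_one (M i j), ← smul_eq_mul, ← smul_single, norm_smul]
  exact mul_le_mul_of_nonneg_right (hM i j) (norm_nonneg _)

/-- The projection onto the span of the coordinate vectors with index satisfying `p`. -/
def coordProj (p : Fin d → Prop) [DecidablePred p] : Matrix (Fin d) (Fin d) ℂ :=
  diagonal fun i => if p i then 1 else 0

lemma rank_coordProj (p : Fin d → Prop) [DecidablePred p] :
    (coordProj p).rank = Fintype.card {i // p i} := by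
  rw [coordProj, rank_diagonal]
  simp

variable {p : Fin d → Prop} [DecidablePred p]

lemma isIdempotentElem_coordProj : IsIdempotentElem (coordProj p) := by
  simp [IsIdempotentElem, coordProj, diagonal_mul_diagonal]

lemma norm_coordProj_mul_diagonal_le {w : Fin d → ℂ} (hc : 0 ≤ c) (hw : ∀ i, p i → ‖w i‖ ≤ c) :
    ‖coordProj p * diagonal w‖ ≤ c := by
  rw [coordProj, diagonal_mul_diagonal, l2_opNorm_diagonal, pi_norm_le_iff_of_nonneg hc]
  intro i
  by_cases hi : p i <;> simp [hi, hw, hc]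

lemma norm_coordProj_le : ‖coordProj p‖ ≤ 1 := by
  simpa using norm_coordProj_mul_diagonal_le (p := p) (w := fun _ => 1) zero_le_one (by simp)

lemma one_sub_coordProj : 1 - coordProj p = coordProj (¬p ·) := by
  rw [coordProj, coordProj, ← diagonal_one, diagonal_sub]
  congr 1
  ext i
  by_cases hi : p i <;> simp [hi]

/-- The span of the coordinate vectors with index satisfying `p`. -/
def coordSpan (p : Fin d → Prop) : Submodule ℂ (EuclideanSpace ℂ (Fin d)) where
  carrier := {v | ∀ i, ¬p i → v i = 0}
  add_mem' hv hw i hi := by simp [hv i hi, hw i hi]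
  zero_mem' _ _ := rfl
  smul_mem' c v hv i hi := by simp [hv i hi]

lemma finrank_coordSpan : Module.finrank ℂ (coordSpan p) = Fintype.card {i // p i} := by
  have h_range : coordSpan p = LinearMap.range (toEuclideanLin (coordProj p)) := by
    ext v
    refine ⟨fun hv => ⟨v, ?_⟩, ?_⟩
    · ext i
      by_cases hi : p i <;> simp [coordProj, toLpLin_apply, mulVec_diagonal, hi, hv i]
    · rintro ⟨w, rfl⟩ i hi
      simp [coordProj, toLpLin_apply, mulVec_diagonal, hi]
  rw [h_range, ← rank_coordProj]
  exact (rank_eq_finrank_range_toLin _ (PiLp.basisFun 2 ℂ _) (PiLp.basisFun 2 ℂ _)).symm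

variable {B : ℝ → Matrix (Fin d) (Fin d) ℂ}

lemma coordProj_mul_eq_mul_mul {M : Matrix (Fin d) (Fin d) ℂ} (hM : M.BlockTriangular id)
    (k : Fin d) : coordProj (k ≤ ·) * M = coordProj (k ≤ ·) * M * coordProj (k ≤ ·) := by
  ext i j
  rw [coordProj, mul_diagonal, diagonal_mul]
  by_cases hi : k ≤ i <;> by_cases hj : k ≤ j <;> simp only [hi, hj, if_true, if_false, mul_one,
    mul_zero, one_mul, zero_mul]
  exact hM ((not_le.1 hj).trans_le hi)

lemma toEuclideanLin_mem_coordSpan {M : Matrix (Fin d) (Fin d) ℂ} (hM : M.BlockTriangular id)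
    (k : Fin d) {v : EuclideanSpace ℂ (Fin d)} (hv : v ∈ coordSpan (· ≤ k)) :
    toEuclideanLin M v ∈ coordSpan (· ≤ k) := by
  intro i hi
  refine Finset.sum_eq_zero (s := .univ) (f := fun j => M i j * v j) fun j _ => ?_
  rcases le_or_gt j k with hj | hj
  · rw [hM (hj.trans_lt (not_le.1 hi)), zero_mul]
  · rw [hv j hj.not_ge, mul_zero]

lemma mul_norm_le_norm_toEuclideanLin_diagonal {p : Fin d → Prop} {w : Fin d → ℂ} (hc : 0 ≤ c)
    (hw : ∀ i, p i → c ≤ ‖w i‖) {v : EuclideanSpace ℂ (Fin d)} (hv : v ∈ coordSpan p) :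
    c * ‖v‖ ≤ ‖toEuclideanLin (diagonal w) v‖ := by
  refine le_of_sq_le_sq ?_ (norm_nonneg _)
  rw [mul_pow, EuclideanSpace.norm_sq_eq, EuclideanSpace.norm_sq_eq, Finset.mul_sum]
  refine Finset.sum_le_sum fun i _ => ?_
  have h_apply : toEuclideanLin (diagonal w) v i = w i * v i :=
    mulVec_diagonal w v.ofLp i
  rw [h_apply, norm_mul, mul_pow]
  by_cases hi : p i
  · gcongr
    exact hw i hi
  · simp [hv i hi]

theorem singVal_succ_matIter_le_add_pow (hB : ∀ x, (B x).BlockTriangular id)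
    (hη : ∀ x, ‖B x - diagonal (B x).diag‖ ≤ η) {k : Fin d} (hc : 0 ≤ c)
    (hB_diag : ∀ x i, k ≤ i → ‖B x i i‖ ≤ c) (n : ℕ) (x : ℝ) :
    singVal (k + 1) (matIter α B n x) ≤ (c + η) ^ n := by
  refine singVal_succ_matIter_le_pow (Q := coordProj (k ≤ ·)) isIdempotentElem_coordProj ?_
    norm_coordProj_le (fun x => coordProj_mul_eq_mul_mul (hB x) k) (fun x => ?_) n x
  · rw [one_sub_coordProj, rank_coordProj, Fintype.card_subtype]
    simp [Finset.filter_gt_eq_Iio]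
  · calc ‖coordProj (k ≤ ·) * B x‖
        = ‖coordProj (k ≤ ·) * diagonal (B x).diag +
            coordProj (k ≤ ·) * (B x - diagonal (B x).diag)‖ := by
          rw [← mul_add, add_sub_cancel]
      _ ≤ c + 1 * η := (norm_add_le _ _).trans <|
          add_le_add (norm_coordProj_mul_diagonal_le hc (hB_diag x)) <|
            (norm_mul_le _ _).trans <|
              mul_le_mul norm_coordProj_le (hη x) (norm_nonneg _) zero_le_one
      _ = c + η := by rw [one_mul]

theorem sub_pow_le_singVal_succ_matIter (hB : ∀ x, (B x).BlockTriangular id)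
    (hη : ∀ x, ‖B x - diagonal (B x).diag‖ ≤ η) {k : Fin d} (hηc : η ≤ c)
    (hB_diag : ∀ x i, i ≤ k → c ≤ ‖B x i i‖) (n : ℕ) (x : ℝ) :
    (c - η) ^ n ≤ singVal (k + 1) (matIter α B n x) := by
  have h_finrank : Module.finrank ℂ (coordSpan (· ≤ k)) = k + 1 := by
    rw [finrank_coordSpan, Fintype.card_subtype, Finset.filter_ge_eq_Iic, Fin.card_Iic]
  rw [← h_finrank]
  refine pow_le_singVal_matIter (h_finrank ▸ Nat.succ_pos k)
    (fun x v hv => toEuclideanLin_mem_coordSpan (hB x) k hv) (sub_nonneg.2 hηc)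
    (fun x v hv => ?_) n x
  have hc : 0 ≤ c := (norm_nonneg _).trans ((hη x).trans hηc)
  have h_diag := mul_norm_le_norm_toEuclideanLin_diagonal hc (hB_diag x) hv
  have h_off := (norm_toEuclideanLin_le (B x - diagonal (B x).diag) v).trans
    (mul_le_mul_of_nonneg_right (hη x) (norm_nonneg v))
  have h_split : toEuclideanLin (diagonal (B x).diag) v =
      toEuclideanLin (B x) v - toEuclideanLin (B x - diagonal (B x).diag) v := by
    rw [← LinearMap.sub_apply, ← map_sub, sub_sub_cancel]
  rw [sub_mul, sub_le_iff_le_add]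
  calc c * ‖v‖ ≤ ‖toEuclideanLin (diagonal (B x).diag) v‖ := h_diag
    _ ≤ ‖toEuclideanLin (B x) v‖ + ‖toEuclideanLin (B x - diagonal (B x).diag) v‖ :=
        h_split ▸ norm_sub_le _ _
    _ ≤ ‖toEuclideanLin (B x) v‖ + η * ‖v‖ := add_le_add_right h_off _

end Triangular

section TriangularCocycle

open Matrix

variable {d : ℕ} {α η K : ℝ} {B : ℝ → Matrix (Fin d) (Fin d) ℂ}

lemma norm_apply_le_norm (M : Matrix (Fin d) (Fin d) ℂ) (i j : Fin d) : ‖M i j‖ ≤ ‖M‖ := by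
  simpa using (norm_apply_le_singVal_one M i j).trans
    (singVal_succ_le_norm_sub (R := 0) (by rw [rank_zero]) M)

lemma isBoundedConj_inv_mul_mul (P : GL (Fin d) ℂ) :
    IsBoundedConj α B fun x => (P⁻¹).val * B x * P.val :=
  ⟨fun _ => P, ⟨max ‖P.val‖ ‖(P⁻¹).val‖, fun _ => ⟨le_max_left _ _, le_max_right _ _⟩⟩,
    fun x => by simp only [Matrix.mul_assoc, Units.mul_inv_cancel_left]⟩

/-- The diagonal matrix with entries `1, s, s², …`, conjugation by which multiplies the
`(i, j)` entry by `s ^ (j - i)`. -/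
def powDiagonal (d : ℕ) (s : ℂˣ) : GL (Fin d) ℂ :=
  Units.map (diagonalRingHom (Fin d) ℂ).toMonoidHom (MulEquiv.piUnits.symm fun i => s ^ i.val)

lemma powDiagonal_inv_mul_mul_apply (s : ℂˣ) (M : Matrix (Fin d) (Fin d) ℂ) (i j : Fin d) :
    ((powDiagonal d s)⁻¹.val * M * (powDiagonal d s).val) i j =
      (s ^ i.val)⁻¹.val * M i j * s ^ j.val := by
  have h_val : (powDiagonal d s).val = diagonal fun i => (s ^ i.val).val := rfl
  have h_inv : (powDiagonal d s)⁻¹.val = diagonal fun i => (s ^ i.val)⁻¹.val := rfl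
  rw [h_val, h_inv, mul_diagonal, diagonal_mul, Units.val_pow_eq_pow_val]

lemma norm_powDiagonal_inv_mul_mul_apply_le {s : ℂˣ} (hs : ‖s.val‖ ≤ 1)
    (M : Matrix (Fin d) (Fin d) ℂ) {i j : Fin d} (hij : i < j) :
    ‖((powDiagonal d s)⁻¹.val * M * (powDiagonal d s).val) i j‖ ≤ ‖s.val‖ * ‖M i j‖ := by
  obtain ⟨m, hm⟩ := Nat.exists_eq_add_of_lt hij
  have h_eq : (s ^ i.val)⁻¹.val * M i j * s.val ^ j.val = s.val ^ m * (s.val * M i j) := by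
    rw [hm, pow_succ, pow_add, Units.val_inv_eq_inv_val, Units.val_pow_eq_pow_val]
    field_simp
  rw [powDiagonal_inv_mul_mul_apply, h_eq, norm_mul, norm_mul, norm_pow]
  exact mul_le_of_le_one_left (by positivity) (pow_le_one₀ (norm_nonneg _) hs)

lemma norm_sub_diagonal_le_of_blockTriangular {M : Matrix (Fin d) (Fin d) ℂ}
    (hM : M.BlockTriangular id) {r : ℝ} (hr : 0 ≤ r) (h_le : ∀ i j, i < j → ‖M i j‖ ≤ r) :
    ‖M - diagonal M.diag‖ ≤ r * ∑ i, ∑ j, ‖(single i j 1 : Matrix (Fin d) (Fin d) ℂ)‖ := by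
  refine norm_le_sum_norm_single _ fun i j => ?_
  rcases lt_trichotomy i j with hij | rfl | hij
  · rw [Matrix.sub_apply, diagonal_apply_ne _ hij.ne, sub_zero]
    exact h_le i j hij
  · rwa [Matrix.sub_apply, diagonal_apply_eq, diag_apply, sub_self, norm_zero]
  · rwa [Matrix.sub_apply, diagonal_apply_ne _ hij.ne', hM hij, sub_zero, norm_zero]

theorem exists_isBoundedConj_norm_sub_diagonal_le (hB : ∀ x, (B x).BlockTriangular id)
    (hK : ∀ x, ‖B x‖ ≤ K) (hη : 0 < η) :
    ∃ B' : ℝ → Matrix (Fin d) (Fin d) ℂ, IsBoundedConj α B B' ∧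
      (∀ x, (B' x).BlockTriangular id) ∧ (∀ x i, B' x i i = B x i i) ∧
        ∀ x, ‖B' x - diagonal (B' x).diag‖ ≤ η := by
  set S : ℝ := ∑ i, ∑ j, ‖(single i j 1 : Matrix (Fin d) (Fin d) ℂ)‖
  have hK0 : 0 ≤ K := (norm_nonneg _).trans (hK 0)
  obtain ⟨s, hs, hsη⟩ := exists_pos_mul_lt hη (K * S)
  have hr : 0 < min s 1 := lt_min hs one_pos
  let u : ℂˣ := Units.mk0 (min s 1 : ℝ) (Complex.ofReal_ne_zero.2 hr.ne')
  have hu : ‖u.val‖ = min s 1 := Complex.norm_of_nonneg hr.le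
  have h_diag (x : ℝ) (i : Fin d) :
      ((powDiagonal d u)⁻¹.val * B x * (powDiagonal d u).val) i i = B x i i := by
    rw [powDiagonal_inv_mul_mul_apply, Units.val_inv_eq_inv_val, Units.val_pow_eq_pow_val]
    field_simp
  have h_tri (x : ℝ) :
      ((powDiagonal d u)⁻¹.val * B x * (powDiagonal d u).val).BlockTriangular id := by
    intro i j hji
    rw [powDiagonal_inv_mul_mul_apply, hB x hji, mul_zero, zero_mul]
  refine ⟨_, isBoundedConj_inv_mul_mul (powDiagonal d u), h_tri, h_diag, fun x => ?_⟩
  have h_entry (i j : Fin d) (hij : i < j) :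
      ‖((powDiagonal d u)⁻¹.val * B x * (powDiagonal d u).val) i j‖ ≤ min s 1 * K := by
    rw [← hu]
    exact (norm_powDiagonal_inv_mul_mul_apply_le (hu.trans_le (min_le_right s 1)) _ hij).trans
      (mul_le_mul_of_nonneg_left ((norm_apply_le_norm _ i j).trans (hK x)) (norm_nonneg _))
  calc ‖_ - _‖ ≤ min s 1 * K * S :=
         norm_sub_diagonal_le_of_blockTriangular (h_tri x) (by positivity) h_entry
    _ = K * S * min s 1 := by ring
    _ ≤ K * S * s := by gcongr; exact min_le_left s 1
    _ ≤ η := hsη.le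

theorem hasUniformLyapunovExp_of_blockTriangular (hB : ∀ x, (B x).BlockTriangular id)
    (hK : ∀ x, ‖B x‖ ≤ K) {l : Fin d → ℝ} (hl : Antitone l)
    (hB_diag : ∀ x i, ‖B x i i‖ = Real.exp (l i)) (k : Fin d) :
    HasUniformLyapunovExp α B (k + 1) (l k) where
  upper b hb := by
    obtain ⟨B', h_conj, h_tri, h_diag, h_norm⟩ := exists_isBoundedConj_norm_sub_diagonal_le
      (α := α) hB hK (sub_pos.2 (Real.exp_lt_exp.2 hb))
    refine h_conj.exists_singVal_le_exp k.val.succ_pos ⟨0, fun n x => ?_⟩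
    refine (singVal_succ_matIter_le_add_pow h_tri h_norm (Real.exp_pos (l k)).le
      (fun x i hi => ?_) n x).trans_eq ?_
    · rw [h_diag, hB_diag]
      exact Real.exp_le_exp.2 (hl hi)
    · rw [add_sub_cancel, zero_add, Real.exp_nat_mul]
  lower a ha := by
    obtain ⟨B', h_conj, h_tri, h_diag, h_norm⟩ := exists_isBoundedConj_norm_sub_diagonal_le
      (α := α) hB hK (sub_pos.2 (Real.exp_lt_exp.2 ha))
    refine h_conj.exists_exp_le_singVal k.val.succ_pos ⟨0, fun n x => ?_⟩
    refine le_of_eq_of_le ?_ (sub_pow_le_singVal_succ_matIter h_tri h_norm (c := Real.exp (l k))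
      (sub_le_self _ (Real.exp_pos a).le) (fun x i hi => ?_) n x)
    · rw [sub_sub_cancel, zero_add, Real.exp_nat_mul]
    · rw [h_diag, hB_diag]
      exact Real.exp_le_exp.2 (hl hi)

end TriangularCocycle

section SimpleSpectrum

open Matrix PeriodicAnalytic

variable {d k : ℕ} {α : ℝ} {A : ℝ → Matrix (Fin d) (Fin d) ℂ}
  {M : Matrix (Fin d) (Fin d) PeriodicAnalytic}

lemma HasLyapunovExp.bot_of_one (h : HasLyapunovExp α A 1 ⊥) (hk : 0 < k) :
    HasLyapunovExp α A k ⊥ :=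
  tendsto_of_tendsto_of_tendsto_of_le_of_le tendsto_const_nhds h (fun _ => bot_le) fun n =>
    inv_mul_le_inv_mul (elogIntegral_mono_ae (.of_forall fun _ => singVal_nonneg k _)
      (.of_forall fun _ => singVal_le_singVal_one hk _)) n

theorem exists_twistedConj_eq_zero_of_le
    (hM : HasLyapunovExp α (fun x => evalMatrix x M) 1 ⊥) :
    ∃ U : GL (Fin d) PeriodicAnalytic, ∀ i j, j ≤ i → twistedConj (shift α) U M i j = 0 := by
  obtain ⟨U, m, h_zero, h_det⟩ := exists_twistedConj_blockTriangular (shift α) M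
  suffices h : ∀ j : Fin d, j.val < m from ⟨U, fun i j => h_zero i j (h j)⟩
  by_contra! hm
  refine ne_bot_of_hasLyapunovExp_one (p := (m ≤ ·.val)) hm ?_ h_det
    (isBoundedConj_evalMatrix_twistedConj α U M) hM rfl
  exact Matrix.ext fun ⟨i, hi⟩ ⟨j, hj⟩ => h_zero i j (not_le.1 hj) ((not_le.1 hj).trans_le hi).le

theorem hasLyapunovExp_of_twistedConj_blockTriangular {U : GL (Fin d) PeriodicAnalytic}
    (hU : (twistedConj (shift α) U M).BlockTriangular id) {l : Fin d → ℝ} (hl : Antitone l)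
    (h_diag : ∀ i x, ‖twistedConj (shift α) U M i i x‖ = Real.exp (l i)) (k : Fin d) :
    HasLyapunovExp α (fun x => evalMatrix x M) (k + 1) (l k) := by
  obtain ⟨K, hK⟩ := exists_forall_norm_evalMatrix_le (twistedConj (shift α) U M)
  have h_tri (x : ℝ) : (evalMatrix x (twistedConj (shift α) U M)).BlockTriangular id :=
    fun i j hij => congrArg (eval x) (hU hij)
  exact ((hasUniformLyapunovExp_of_blockTriangular h_tri hK hl (fun x i => h_diag i x)
    k).of_isBoundedConj k.val.succ_pos (isBoundedConj_evalMatrix_twistedConj α U M)).hasLyapunovExp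

end SimpleSpectrum

theorem stmt_3_general {d : ℕ} (α : ℝ) (A : ℝ → Matrix (Fin d) (Fin d) ℂ)
    (hA : AnalyticPeriodicMat A) (hL1 : HasLyapunovExp α A 1 ⊥) :
    (∀ k : Fin d, HasLyapunovExp α A ((k : ℕ) + 1) ⊥) ∧
    ∃ A' : ℝ → Matrix (Fin d) (Fin d) ℂ,
      AnalyticPeriodicMat A' ∧
      ∀ ε : ℂ, ε ≠ 0 →
        ∃ L : Fin d → EReal,
          (∀ k : Fin d, HasLyapunovExp α (fun x => A x + ε • A' x) ((k : ℕ) + 1) (L k)) ∧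
          StrictAnti L := by
  refine ⟨fun k => hL1.bot_of_one k.val.succ_pos, ?_⟩
  obtain ⟨M, hM⟩ := PeriodicAnalytic.analyticPeriodicMat_iff.1 hA
  obtain rfl : A = fun x => PeriodicAnalytic.evalMatrix x M := funext hM
  obtain ⟨U, hU⟩ := exists_twistedConj_eq_zero_of_le hL1
  obtain ⟨N, hN⟩ := twistedConj_surjective (PeriodicAnalytic.shift α) U
    (.diagonal fun i => algebraMap ℂ PeriodicAnalytic (Real.exp (-i.val)))
  refine ⟨fun x => PeriodicAnalytic.evalMatrix x N,
    PeriodicAnalytic.analyticPeriodicMat_iff.2 ⟨N, fun _ => rfl⟩, fun ε hε => ?_⟩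
  let l (i : Fin d) : ℝ := Real.log ‖ε‖ - i.val
  have hl : StrictAnti l := fun i j hij => sub_lt_sub_left (Nat.cast_lt.2 hij) _
  have h_exp (i : Fin d) (x : ℝ) :
      ‖(ε • algebraMap ℂ PeriodicAnalytic (Real.exp (-i.val))) x‖ = Real.exp (l i) := by
    rw [Real.exp_sub, Real.exp_log (norm_pos_iff.2 hε), div_eq_mul_inv, ← Real.exp_neg]
    exact (norm_mul ε _).trans (congrArg _ (Complex.norm_of_nonneg (Real.exp_pos _).le))
  refine ⟨fun k => l k, hasLyapunovExp_of_twistedConj_blockTriangular (M := M + ε • N) (U := U)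
    ?_ hl.antitone fun i x => ?_, fun i j hij => EReal.coe_lt_coe (hl hij)⟩
  all_goals rw [twistedConj_add_smul, hN, ← Matrix.diagonal_smul]
  · exact .add (fun i j hij => hU i j (le_of_lt hij)) (Matrix.blockTriangular_diagonal _)
  · rw [Matrix.add_apply, hU i i le_rfl, zero_add, Matrix.diagonal_apply_eq]
    exact h_exp i x

/-- If `L₁(α,A) = -∞` (in which case all the Lyapunov exponents
`L₁,…,L_d` are `-∞`), then there is an analytic 1-periodic `A'` such that for every
`ε ≠ 0` all Lyapunov exponents of `(α, A + εA')` are distinct: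
`L₁ > L₂ > … > L_d`. In particular there are arbitrarily small analytic perturbations
with simple Lyapunov spectrum. -/
theorem stmt_3 {d : ℕ} (α : ℝ) (A : ℝ → Matrix (Fin d) (Fin d) ℂ)
    (hA : AnalyticPeriodicMat A)
    (hL1 : HasLyapunovExp α A 1 ⊥) :
    (∀ k : Fin d, HasLyapunovExp α A ((k : ℕ) + 1) ⊥) ∧
    ∃ A' : ℝ → Matrix (Fin d) (Fin d) ℂ,
      AnalyticPeriodicMat A' ∧
      ∀ ε : ℝ, ε ≠ 0 →
        ∃ L : Fin d → EReal,
          (∀ k : Fin d,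
            HasLyapunovExp α (fun x => A x + (ε : ℂ) • A' x) ((k : ℕ) + 1) (L k)) ∧
          StrictAnti L :=
  (stmt_3_general α A hA hL1).imp_right fun ⟨A', hA', h⟩ =>
    ⟨A', hA', fun ε hε => h ε (Complex.ofReal_ne_zero.2 hε)⟩
end
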